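/- There exists a constant C > 0 such that for every real x ≥ 1, the ratio (number of pairs (I, J) ∈ P(x) with I ⊔ J = ⊤) / (number of pairs in P(x)) differs from 1/ζ_{ℚ(i)}(2) by at most C·x^(−2/3). -/

import Mathlib

/-!
The multiplicative monoid of ideals of `ℤ[i]` factors uniquely, so Möbius inversion expresses the
number of coprime pairs as `∑ μ(D) · A(x / N(D)) ^ 2`, where `A(y)` counts the nonzero ideals of
norm at most `y`. Whenever `A(y) = c y + O(y ^ θ)` with `0 < θ < 1`, replacing `A` by its main term
costs `O(x ^ (1 + θ))`, because `∑ N(D) ^ -(1 + θ)` converges; as `∑ μ(D) N(D) ^ -2` is the inverse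
of `ζ(2)`, dividing by `A(x) ^ 2` leaves `1 / ζ(2) + O(x ^ (θ - 1))`.

An ideal of `ℤ[i]` has a unique generator `a + b i` with `a > 0` and `b ≥ 0`, so `A(y)` counts
lattice points in a quarter disc of radius `√y`, and `θ = 1 / 3` is the classical exponent in the
Gauss circle problem. Cutting the quarter disc along the diagonal reduces that count to sums of
`⌊√(y - n ^ 2)⌋` over `n ≤ √(y / 2)`, where the second derivative of the square root has size
`y ^ (-1 / 2)`. The sawtooth error is integrated once, expanded in its absolutely convergent Fourier
series, and each frequency is bounded by van der Corput's second derivative test.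
-/

open Real

/-- The absolute norm of an ideal of `ℤ[i]`: the cardinality of the quotient ring. -/
noncomputable def normI (I : Ideal GaussianInt) : ℕ := Nat.card (GaussianInt ⧸ I)

/-- `P x` : pairs of nonzero ideals of `ℤ[i]` with both norms at most `x`. -/
noncomputable def P (x : ℝ) : Set (Ideal GaussianInt × Ideal GaussianInt) :=
  {p | p.1 ≠ ⊥ ∧ p.2 ≠ ⊥ ∧ (normI p.1 : ℝ) ≤ x ∧ (normI p.2 : ℝ) ≤ x}

/-- `ζ_{ℚ(i)}(2)`, the sum of `1/N(I)²` over nonzero ideals of `ℤ[i]`. -/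
noncomputable def zetaQi2 : ℝ := ∑' I : {I : Ideal GaussianInt // I ≠ ⊥}, 1 / (normI I.1 : ℝ) ^ 2

open scoped FourierTransform fwdDiff

section ExponentialSums

lemma norm_sum_Icc_mul_sub_le {A : Type*} [SeminormedRing A] {w z : ℕ → A} {v : ℕ → ℝ} {a b : ℕ}
    (hab : a ≤ b) (hz : ∀ n, ‖z n‖ ≤ 1)
    (hw : ∀ n, a ≤ n → n < b → ‖w (n + 1) - w n‖ ≤ v n - v (n + 1)) :
    ‖∑ n ∈ Finset.Icc a b, w n * (z n - z (n + 1))‖ ≤ ‖w a‖ + ‖w b‖ + (v a - v b) := by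
  have mul_le (x : A) (n : ℕ) : ‖x * z n‖ ≤ ‖x‖ :=
    (norm_mul_le _ _).trans (mul_le_of_le_one_right (norm_nonneg _) (hz n))
  suffices ‖∑ n ∈ Finset.Icc a b, w n * (z n - z (n + 1)) + w b * z (b + 1)‖
      ≤ ‖w a‖ + (v a - v b) by
    have := norm_sub_le (∑ n ∈ Finset.Icc a b, w n * (z n - z (n + 1)) + w b * z (b + 1))
      (w b * z (b + 1))
    rw [add_sub_cancel_right] at this
    linarith [mul_le (w b) (b + 1)]
  induction b, hab using Nat.le_induction with
  | base => simpa [mul_sub] using mul_le (w a) a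
  | succ b hab ih =>
    have split : ∑ n ∈ Finset.Icc a (b + 1), w n * (z n - z (n + 1)) + w (b + 1) * z (b + 1 + 1)
        = (∑ n ∈ Finset.Icc a b, w n * (z n - z (n + 1)) + w b * z (b + 1))
          + (w (b + 1) - w b) * z (b + 1) := by
      rw [Finset.sum_Icc_succ_top (by lia)]; noncomm_ring
    rw [split]
    calc _ ≤ (‖w a‖ + (v a - v b)) + ‖w (b + 1) - w b‖ :=
          norm_add_le_of_le (ih fun n han hnb ↦ hw n han (by lia)) (mul_le _ _)
      _ ≤ _ := by linarith [hw b hab (by lia)]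

lemma two_mul_le_sin_pi_mul {t δ : ℝ} (hδ : 0 ≤ δ) (ht : t ∈ Set.Icc δ (1 - δ)) :
    2 * δ ≤ sin (π * t) := by
  obtain ⟨hδt, htδ⟩ := ht
  have jordan {s : ℝ} (hs : 0 ≤ s) (hs' : s ≤ 1 / 2) : 2 * s ≤ sin (π * s) := by
    have := mul_le_sin (x := π * s) (by positivity) (by nlinarith [pi_pos])
    rwa [← mul_assoc, div_mul_cancel₀ _ pi_ne_zero] at this
  rcases le_total t (1 / 2) with ht | ht
  · linarith [jordan (by linarith) ht]
  · have := jordan (s := 1 - t) (by linarith) (by linarith)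
    rw [mul_one_sub π t, sin_pi_sub] at this
    linarith

lemma cot_le_cot {s t : ℝ} (hs : 0 < s) (hst : s ≤ t) (ht : t < π) : cot t ≤ cot s := by
  rw [cot_eq_cos_div_sin, cot_eq_cos_div_sin,
    div_le_div_iff₀ (sin_pos_of_pos_of_lt_pi (hs.trans_le hst) ht)
      (sin_pos_of_pos_of_lt_pi hs (hst.trans_lt ht))]
  have : 0 ≤ sin (t - s) := sin_nonneg_of_nonneg_of_le_pi (by linarith) (by linarith)
  rw [sin_sub] at this
  linarith

lemma norm_one_sub_fourierChar (t : ℝ) : ‖1 - (𝐞 t : ℂ)‖ = 2 * |sin (π * t)| := by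
  rw [norm_sub_rev, fourierChar_apply, mul_comm _ Complex.I,
    Complex.norm_exp_I_mul_ofReal_sub_one, Real.norm_eq_abs, abs_mul, abs_two]
  ring_nf

lemma inv_one_sub_fourierChar {t : ℝ} (ht : sin (π * t) ≠ 0) :
    (1 - (𝐞 t : ℂ))⁻¹ = 1 / 2 + Complex.I / 2 * cot (π * t) := by
  have h_exp : (𝐞 t : ℂ) = (cos (π * t) + sin (π * t) * Complex.I) ^ 2 := by
    rw [fourierChar_apply, Complex.ofReal_cos, Complex.ofReal_sin, ← Complex.exp_mul_I,
      ← Complex.exp_nat_mul]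
    push_cast
    ring_nf
  have h_pyth : (sin (π * t) : ℂ) ^ 2 + (cos (π * t) : ℂ) ^ 2 = 1 := by
    exact_mod_cast sin_sq_add_cos_sq (π * t)
  have ht' : (sin (π * t) : ℂ) ≠ 0 := mod_cast ht
  apply inv_eq_of_mul_eq_one_left
  rw [h_exp, cot_eq_cos_div_sin, Complex.ofReal_div]
  field_simp
  have hI := Complex.I_sq
  generalize (sin (π * t) : ℂ) = s at *
  generalize (cos (π * t) : ℂ) = c at *
  linear_combination (-(-s + c * Complex.I)) * h_pyth -
    (2 * s * c ^ 2 + s ^ 3 + s ^ 2 * c * Complex.I) * hI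

lemma norm_inv_one_sub_fourierChar_le {t δ : ℝ} (hδ : 0 < δ) (ht : t ∈ Set.Icc δ (1 - δ)) :
    ‖(1 - (𝐞 t : ℂ))⁻¹‖ ≤ 1 / (4 * δ) := by
  have := two_mul_le_sin_pi_mul hδ.le ht
  rw [norm_inv, norm_one_sub_fourierChar, ← one_div]
  exact one_div_le_one_div_of_le (by positivity) (by linarith [le_abs_self (sin (π * t))])

lemma norm_inv_one_sub_fourierChar_sub {s t : ℝ} (hs : 0 < s) (hst : s ≤ t) (ht : t < 1) :
    ‖(1 - (𝐞 t : ℂ))⁻¹ - (1 - (𝐞 s : ℂ))⁻¹‖ = cot (π * s) / 2 - cot (π * t) / 2 := by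
  have hπ := pi_pos
  have sin_ne_zero {r : ℝ} (hr : 0 < r) (hr' : r < 1) : sin (π * r) ≠ 0 :=
    (sin_pos_of_pos_of_lt_pi (by positivity) (by nlinarith)).ne'
  have cot_le : cot (π * t) ≤ cot (π * s) :=
    cot_le_cot (by positivity) (by gcongr) (by nlinarith)
  rw [inv_one_sub_fourierChar (sin_ne_zero (hs.trans_le hst) ht),
    inv_one_sub_fourierChar (sin_ne_zero hs (hst.trans_lt ht)), add_sub_add_left_eq_sub,
    ← mul_sub, ← Complex.ofReal_sub, norm_mul, Complex.norm_real, norm_of_nonpos (by linarith)]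
  simp
  ring

lemma fourierChar_intCast (k : ℤ) : 𝐞 (k : ℝ) = 1 := by
  ext
  rw [fourierChar_apply, Circle.coe_one, Complex.exp_eq_one_iff]
  exact ⟨k, by push_cast; ring⟩

lemma fourierChar_eq_inv_one_sub_mul_sub (s : ℝ) {t : ℝ} (ht : sin (π * t) ≠ 0) :
    (𝐞 s : ℂ) = (1 - (𝐞 t : ℂ))⁻¹ * (𝐞 s - 𝐞 (s + t)) := by
  have : 1 - (𝐞 t : ℂ) ≠ 0 := by
    rw [← norm_pos_iff, norm_one_sub_fourierChar]
    positivity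
  rw [AddChar.map_add_eq_mul, Circle.coe_mul, ← mul_one_sub, mul_left_comm, inv_mul_cancel₀ this,
    mul_one]

/-- The **Kusmin–Landau inequality**. -/
theorem norm_sum_fourierChar_le_of_fwdDiff_mem_Icc {f : ℕ → ℝ} {a b : ℕ} {k : ℤ} {δ : ℝ}
    (hab : a ≤ b) (hδ : 0 < δ) (h_mono : MonotoneOn (Δ_[1] f) (Set.Icc a b))
    (h_mem : ∀ n ∈ Set.Icc a b, Δ_[1] f n ∈ Set.Icc (k + δ) (k + 1 - δ)) :
    ‖∑ n ∈ Finset.Icc a b, (𝐞 (f n) : ℂ)‖ ≤ 1 / δ := by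
  let t (n : ℕ) : ℝ := Δ_[1] f n - k
  let w (n : ℕ) : ℂ := (1 - (𝐞 (t n) : ℂ))⁻¹
  have t_mem {n} (hn : n ∈ Set.Icc a b) : t n ∈ Set.Icc δ (1 - δ) :=
    ⟨by linarith [(h_mem n hn).1], by linarith [(h_mem n hn).2]⟩
  have norm_w_le {n} (hn : n ∈ Set.Icc a b) : ‖w n‖ ≤ 1 / (4 * δ) :=
    norm_inv_one_sub_fourierChar_le hδ (t_mem hn)
  have norm_w_sub {m n} (hm : m ∈ Set.Icc a b) (hn : n ∈ Set.Icc a b) (hmn : m ≤ n) :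
      ‖w n - w m‖ = cot (π * t m) / 2 - cot (π * t n) / 2 :=
    norm_inv_one_sub_fourierChar_sub (hδ.trans_le (t_mem hm).1)
      (sub_le_sub_right (h_mono hm hn hmn) _) (by linarith [(t_mem hn).2])
  have fourierChar_eq {n} (hn : n ∈ Set.Icc a b) :
      (𝐞 (f n) : ℂ) = w n * (𝐞 (f n) - 𝐞 (f (n + 1))) := by
    have add_t : f (n + 1) = f n + t n + k := by simp only [t, fwdDiff]; ring
    rw [add_t, AddChar.map_add_eq_mul _ _ (k : ℝ), fourierChar_intCast, mul_one]
    refine fourierChar_eq_inv_one_sub_mul_sub _ (ne_of_gt ?_)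
    linarith [two_mul_le_sin_pi_mul hδ.le (t_mem hn)]
  have ha : a ∈ Set.Icc a b := Set.left_mem_Icc.2 hab
  have hb : b ∈ Set.Icc a b := Set.right_mem_Icc.2 hab
  calc ‖∑ n ∈ Finset.Icc a b, (𝐞 (f n) : ℂ)‖
      = ‖∑ n ∈ Finset.Icc a b, w n * ((𝐞 (f n) : ℂ) - 𝐞 (f (n + 1)))‖ :=
        congr_arg _ (Finset.sum_congr rfl fun n hn ↦ fourierChar_eq (Finset.mem_Icc.1 hn))
    _ ≤ ‖w a‖ + ‖w b‖ + (cot (π * t a) / 2 - cot (π * t b) / 2) :=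
        norm_sum_Icc_mul_sub_le hab (z := fun n ↦ (𝐞 (f n) : ℂ))
          (v := fun n ↦ cot (π * t n) / 2) (fun n ↦ (Circle.norm_coe _).le)
          fun n han hnb ↦ (norm_w_sub ⟨han, hnb.le⟩ ⟨by lia, hnb⟩ n.le_succ).le
    _ ≤ 2 * (‖w a‖ + ‖w b‖) := by linarith [norm_w_sub ha hb hab, norm_sub_le (w b) (w a)]
    _ ≤ 2 * (1 / (4 * δ) + 1 / (4 * δ)) := by
        gcongr
        exacts [norm_w_le ha, norm_w_le hb]
    _ = 1 / δ := by field_simp; norm_num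

lemma mul_sub_le_sub_of_le_fwdDiff {g : ℕ → ℝ} {N : ℕ} {l : ℝ}
    (hg : ∀ n, n + 1 < N → l ≤ Δ_[1] g n) {a b : ℕ} (hab : a ≤ b) (hb : b < N) :
    l * (b - a) ≤ g b - g a := by
  induction b, hab using Nat.le_induction with
  | base => simp
  | succ b _ ih =>
    have := hg b hb
    rw [fwdDiff] at this
    push_cast
    linarith [ih (by lia)]

lemma sub_le_mul_sub_of_fwdDiff_le {g : ℕ → ℝ} {N : ℕ} {u : ℝ}
    (hg : ∀ n, n + 1 < N → Δ_[1] g n ≤ u) {a b : ℕ} (hab : a ≤ b) (hb : b < N) :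
    g b - g a ≤ u * (b - a) := by
  have := mul_sub_le_sub_of_le_fwdDiff (g := -g) (l := -u)
    (fun n hn ↦ by simpa [fwdDiff, neg_add_eq_sub, add_comm u] using hg n hn) hab hb
  simp only [Pi.neg_apply] at this
  linarith

lemma monotoneOn_Iio_of_fwdDiff_nonneg {g : ℕ → ℝ} {N : ℕ}
    (hg : ∀ n, n + 1 < N → 0 ≤ Δ_[1] g n) : MonotoneOn g (Set.Iio N) :=
  monotoneOn_of_le_succ Set.ordConnected_Iio fun n _ _ hn ↦ sub_nonneg.1 (hg n hn)

lemma exists_eq_Icc_of_ordConnected {S : Finset ℕ} (hS : S.Nonempty)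
    (hS' : (S : Set ℕ).OrdConnected) : ∃ a b, a ≤ b ∧ S = Finset.Icc a b := by
  refine ⟨S.min' hS, S.max' hS, S.min'_le_max' hS, Finset.Subset.antisymm
    (fun n hn ↦ Finset.mem_Icc.2 ⟨S.min'_le n hn, S.le_max' n hn⟩) fun n hn ↦ ?_⟩
  exact hS'.out (S.min'_mem hS) (S.max'_mem hS) (Finset.mem_Icc.1 hn)

lemma card_filter_mem_Icc_le {g : ℕ → ℝ} {N : ℕ} {l : ℝ} (hl : 0 < l)
    (hg : ∀ n, n + 1 < N → l ≤ Δ_[1] g n) {p q : ℝ} (hpq : p ≤ q) :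
    (((Finset.range N).filter (g · ∈ Set.Icc p q)).card : ℝ) ≤ (q - p) / l + 1 := by
  set S := (Finset.range N).filter (g · ∈ Set.Icc p q)
  rcases S.eq_empty_or_nonempty with hS | hS
  · have := sub_nonneg.2 hpq
    simp only [hS, Finset.card_empty, Nat.cast_zero]
    positivity
  obtain ⟨-, hp, -⟩ := Finset.mem_filter.1 (S.min'_mem hS)
  obtain ⟨hN, -, hq⟩ := Finset.mem_filter.1 (S.max'_mem hS)
  have hle : S.min' hS ≤ S.max' hS := S.min'_le_max' hS
  have card_le : S.card ≤ S.max' hS + 1 - S.min' hS := by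
    rw [← Nat.card_Icc]
    exact Finset.card_le_card fun n hn ↦
      Finset.mem_Icc.2 ⟨S.min'_le n hn, S.le_max' n hn⟩
  have growth := mul_sub_le_sub_of_le_fwdDiff hg hle (Finset.mem_range.1 hN)
  calc (S.card : ℝ) ≤ (S.max' hS + 1 - S.min' hS : ℕ) := mod_cast card_le
    _ = (S.max' hS - S.min' hS : ℝ) + 1 := by
      rw [Nat.cast_sub (by lia)]
      push_cast
      ring
    _ ≤ (q - p) / l + 1 := by
      gcongr
      rw [le_div_iff₀ hl]
      linarith

lemma norm_sum_fourierChar_le_card {ι : Type*} (S : Finset ι) (f : ι → ℝ) :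
    ‖∑ n ∈ S, (𝐞 (f n) : ℂ)‖ ≤ S.card := by
  simpa only [Circle.norm_coe, Finset.sum_const, nsmul_one] using
    norm_sum_le S fun n ↦ (𝐞 (f n) : ℂ)

lemma norm_sum_filter_fwdDiff_mem_Icc_le {f : ℕ → ℝ} {N : ℕ} {k : ℤ} {δ : ℝ} (hδ : 0 < δ)
    (h_mono : MonotoneOn (Δ_[1] f) (Set.Iio N)) :
    ‖∑ n ∈ (Finset.range N).filter (Δ_[1] f · ∈ Set.Icc (k + δ) (k + 1 - δ)), (𝐞 (f n) : ℂ)‖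
      ≤ 1 / δ := by
  set G := (Finset.range N).filter (Δ_[1] f · ∈ Set.Icc (k + δ) (k + 1 - δ)) with hG
  rcases G.eq_empty_or_nonempty with h | h
  · simp [h, hδ.le]
  have mem_G {n} : n ∈ G ↔ n ∈ Set.Iio N ∧ Δ_[1] f n ∈ Set.Icc (k + δ) (k + 1 - δ) := by
    simp [hG]
  have ord : (G : Set ℕ).OrdConnected := ⟨fun a ha b hb n hn ↦ by
    rw [Finset.mem_coe, mem_G] at ha hb ⊢
    have hnN : n ∈ Set.Iio N := hn.2.trans_lt hb.1
    exact ⟨hnN, ha.2.1.trans (h_mono ha.1 hnN hn.1), (h_mono hnN hb.1 hn.2).trans hb.2.2⟩⟩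
  obtain ⟨a, b, hab, hGab⟩ := exists_eq_Icc_of_ordConnected h ord
  have mem_of_mem {n} (hn : n ∈ Set.Icc a b) := mem_G.1 (hGab ▸ Finset.mem_Icc.2 hn)
  rw [hGab]
  exact norm_sum_fourierChar_le_of_fwdDiff_mem_Icc hab hδ
    (h_mono.mono fun n hn ↦ (mem_of_mem hn).1) fun n hn ↦ (mem_of_mem hn).2

lemma norm_sum_filter_floor_fwdDiff_le {f : ℕ → ℝ} {N : ℕ} {l u : ℝ} (hl : 0 < l)
    (hl' : l ≤ 1 / 4) (hf : ∀ n, n + 1 < N → Δ_[1] (Δ_[1] f) n ∈ Set.Icc l u) (k : ℤ) :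
    ‖∑ n ∈ (Finset.range N).filter (⌊Δ_[1] f ·⌋ = k), (𝐞 (f n) : ℂ)‖ ≤ 4 / √l := by
  set δ := √l
  have hδ : 0 < δ := sqrt_pos.2 hl
  have hδ' : δ ≤ 1 / 2 := by
    rw [sqrt_le_left (by norm_num)]
    linarith
  set S := (Finset.range N).filter (⌊Δ_[1] f ·⌋ = k)
  set G := (Finset.range N).filter (Δ_[1] f · ∈ Set.Icc (k + δ) (k + 1 - δ))
  set L := (Finset.range N).filter (Δ_[1] f · ∈ Set.Icc (k : ℝ) (k + δ))
  set R := (Finset.range N).filter (Δ_[1] f · ∈ Set.Icc (k + 1 - δ) (k + 1 : ℝ))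
  have G_subset : G ⊆ S := fun n hn ↦ by
    simp only [G, S, Finset.mem_filter, Int.floor_eq_iff, Set.mem_Icc] at hn ⊢
    exact ⟨hn.1, by linarith, by linarith⟩
  have sdiff_subset : S \ G ⊆ L ∪ R := fun n hn ↦ by
    simp only [S, G, L, R, Finset.mem_sdiff, Finset.mem_union, Finset.mem_filter,
      Int.floor_eq_iff, Set.mem_Icc] at hn ⊢
    grind
  have card_L : (L.card : ℝ) ≤ δ / l + 1 := by
    simpa only [add_sub_cancel_left] using
      card_filter_mem_Icc_le hl (fun n hn ↦ (hf n hn).1)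
        (le_add_of_nonneg_right (a := (k : ℝ)) hδ.le)
  have card_R : (R.card : ℝ) ≤ δ / l + 1 := by
    simpa only [sub_sub_cancel] using
      card_filter_mem_Icc_le hl (fun n hn ↦ (hf n hn).1) (sub_le_self (k + 1 : ℝ) hδ.le)
  have near : ‖∑ n ∈ S \ G, (𝐞 (f n) : ℂ)‖ ≤ 2 * (δ / l + 1) := by
    calc _ ≤ ((S \ G).card : ℝ) := norm_sum_fourierChar_le_card _ _
      _ ≤ L.card + R.card := mod_cast (Finset.card_le_card sdiff_subset).trans
          (Finset.card_union_le _ _)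
      _ ≤ _ := by linarith
  have far : ‖∑ n ∈ G, (𝐞 (f n) : ℂ)‖ ≤ 1 / δ :=
    norm_sum_filter_fwdDiff_mem_Icc_le hδ
      (monotoneOn_Iio_of_fwdDiff_nonneg fun n hn ↦ hl.le.trans (hf n hn).1)
  have : δ / l = 1 / δ := by rw [sqrt_div_self', one_div]
  have : 2 ≤ 1 / δ := by rw [le_div_iff₀ hδ]; linarith
  rw [← Finset.sum_sdiff G_subset]
  calc _ ≤ 2 * (δ / l + 1) + 1 / δ := norm_add_le_of_le near far
    _ ≤ 4 * (1 / δ) := by linarith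
    _ = _ := mul_one_div _ _

/-- **Van der Corput's second derivative test**. -/
theorem norm_sum_fourierChar_le_of_fwdDiff_fwdDiff_mem_Icc {f : ℕ → ℝ} {N : ℕ} {l u : ℝ}
    (hl : 0 < l) (hlu : l ≤ u) (hf : ∀ n, n + 1 < N → Δ_[1] (Δ_[1] f) n ∈ Set.Icc l u) :
    ‖∑ n ∈ Finset.range N, (𝐞 (f n) : ℂ)‖ ≤ (u * N + 2) * (4 / √l) := by
  have hu : 0 < u := hl.trans_le hlu
  rcases Nat.eq_zero_or_pos N with rfl | hN
  · simp only [Finset.range_zero, Finset.sum_empty, norm_zero]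
    positivity
  have hs : 0 < √l := sqrt_pos.2 hl
  rcases lt_or_ge (1 / 4) l with hl' | hl'
  · have hs' : 1 / 2 ≤ √l := le_sqrt_of_sq_le (by linarith)
    calc _ ≤ ((Finset.range N).card : ℝ) := norm_sum_fourierChar_le_card _ _
      _ ≤ l * N * (4 / √l) := by
        rw [Finset.card_range, mul_right_comm, mul_div_left_comm, div_sqrt]
        exact le_mul_of_one_le_left N.cast_nonneg (by linarith)
      _ ≤ (u * N + 2) * (4 / √l) := by gcongr; nlinarith
  set g := Δ_[1] f
  have mono : MonotoneOn g (Set.Iio N) :=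
    monotoneOn_Iio_of_fwdDiff_nonneg fun n hn ↦ hl.le.trans (hf n hn).1
  have floor_mem : ∀ n ∈ Finset.range N, ⌊g n⌋ ∈ Finset.Icc ⌊g 0⌋ ⌊g (N - 1)⌋ := fun n hn ↦ by
    rw [Finset.mem_range] at hn
    exact Finset.mem_Icc.2 ⟨Int.floor_le_floor (mono hN hn n.zero_le),
      Int.floor_le_floor (mono hn (Nat.sub_lt hN one_pos) (by lia))⟩
  have card_le : ((Finset.Icc ⌊g 0⌋ ⌊g (N - 1)⌋).card : ℝ) ≤ u * N + 2 := by
    have growth := sub_le_mul_sub_of_fwdDiff_le (fun n hn ↦ (hf n hn).2) (N - 1).zero_le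
      (Nat.sub_lt hN one_pos)
    have := Finset.mem_Icc.1 (floor_mem 0 (Finset.mem_range.2 hN))
    have card_eq : ((Finset.Icc ⌊g 0⌋ ⌊g (N - 1)⌋).card : ℝ) = ⌊g (N - 1)⌋ + 1 - ⌊g 0⌋ :=
      mod_cast Int.card_Icc_of_le ⌊g 0⌋ ⌊g (N - 1)⌋ (by lia)
    rw [Nat.cast_sub (Nat.one_le_of_lt hN)] at growth
    push_cast at growth
    linarith [Int.floor_le (g (N - 1)), Int.lt_floor_add_one (g 0)]
  rw [← Finset.sum_fiberwise_of_maps_to floor_mem]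
  calc _ ≤ ∑ k ∈ Finset.Icc ⌊g 0⌋ ⌊g (N - 1)⌋, 4 / √l :=
        norm_sum_le_of_le _ fun k _ ↦ norm_sum_filter_floor_fwdDiff_le hl hl' hf k
    _ ≤ (u * N + 2) * (4 / √l) := by
      rw [Finset.sum_const, nsmul_eq_mul]
      gcongr

end ExponentialSums

section Sawtooth

/-- The `1`-periodic primitive of the sawtooth `fract t - 1 / 2` vanishing at the integers, that is
`(B₂(fract t) - 1 / 6) / 2` for the second Bernoulli polynomial `B₂`. Its Fourier series converges
absolutely, unlike that of the sawtooth itself. -/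
noncomputable def sawtoothPrimitive (t : ℝ) : ℝ := (Int.fract t ^ 2 - Int.fract t) / 2

lemma sawtoothPrimitive_le (t : ℝ) : sawtoothPrimitive t ≤ (t ^ 2 - t) / 2 := by
  have : 0 ≤ (⌊t⌋ : ℝ) * (⌊t⌋ - 1 + 2 * Int.fract t) := by
    have h₀ := Int.fract_nonneg t
    have h₁ := Int.fract_lt_one t
    rcases le_or_gt 1 ⌊t⌋ with h | h
    · have : (1 : ℝ) ≤ ⌊t⌋ := mod_cast h
      nlinarith
    rcases (Int.le_sub_one_of_lt h).eq_or_lt with h | h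
    · simp [h]
    · have : (⌊t⌋ : ℝ) ≤ -1 := mod_cast Int.le_sub_one_of_lt h
      nlinarith
  rw [sawtoothPrimitive]
  nth_rewrite 3 4 [← Int.floor_add_fract t]
  linarith

lemma sawtoothPrimitive_add_sub_le (t D : ℝ) :
    sawtoothPrimitive (t + D) - sawtoothPrimitive t
      ≤ D * (Int.fract t - 1 / 2) + D ^ 2 / 2 := by
  have periodic : sawtoothPrimitive (t + D) = sawtoothPrimitive (Int.fract t + D) := by
    have : t + D = Int.fract t + D + ⌊t⌋ := by linarith [Int.floor_add_fract t]
    rw [this, sawtoothPrimitive, Int.fract_add_intCast, sawtoothPrimitive]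
  rw [periodic, sawtoothPrimitive.eq_def t]
  linarith [sawtoothPrimitive_le (Int.fract t + D)]

lemma hasSum_cos_sawtoothPrimitive (t : ℝ) :
    HasSum (fun n : ℕ ↦ 1 / (n : ℝ) ^ 2 * cos (2 * π * (n * t)))
      (2 * π ^ 2 * (sawtoothPrimitive t + 1 / 12)) := by
  convert hasSum_one_div_nat_pow_mul_cos one_ne_zero
    ⟨Int.fract_nonneg t, (Int.fract_lt_one t).le⟩ using 1
  · funext n
    have : 2 * π * (n * t) = 2 * π * n * Int.fract t + (n * ⌊t⌋ : ℤ) * (2 * π) := by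
      nth_rewrite 1 [← Int.floor_add_fract t]
      push_cast
      ring
    rw [this, cos_add_int_mul_two_pi, mul_one]
  · simp [sawtoothPrimitive, Polynomial.bernoulli, Finset.sum_range_succ, Nat.choose]
    ring

lemma re_fourierChar (t : ℝ) : (𝐞 t : ℂ).re = cos (2 * π * t) := by
  rw [fourierChar_apply, Complex.exp_ofReal_mul_I_re]

lemma norm_fourierChar_sub_one_le (t : ℝ) : ‖(𝐞 t : ℂ) - 1‖ ≤ 2 * π * |t| := by
  rw [fourierChar_apply, mul_comm _ Complex.I]
  refine norm_exp_I_mul_ofReal_sub_one_le.trans_eq ?_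
  rw [norm_mul, norm_of_nonneg two_pi_pos.le, norm_eq_abs]

lemma hasSum_sum_sawtoothPrimitive_add_sub {ι : Type*} (S : Finset ι) (f : ι → ℝ) (D : ℝ) :
    HasSum (fun n : ℕ ↦ 1 / (n : ℝ) ^ 2 * (((𝐞 (n * D) : ℂ) - 1) * ∑ i ∈ S, (𝐞 (n * f i) : ℂ)).re)
      (2 * π ^ 2 * ∑ i ∈ S, (sawtoothPrimitive (f i + D) - sawtoothPrimitive (f i))) := by
  have termwise (n : ℕ) :
      1 / (n : ℝ) ^ 2 * (((𝐞 (n * D) : ℂ) - 1) * ∑ i ∈ S, (𝐞 (n * f i) : ℂ)).re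
        = ∑ i ∈ S, (1 / (n : ℝ) ^ 2 * cos (2 * π * (n * (f i + D)))
          - 1 / (n : ℝ) ^ 2 * cos (2 * π * (n * f i))) := by
    rw [Finset.mul_sum, Complex.re_sum, Finset.mul_sum]
    refine Finset.sum_congr rfl fun i _ ↦ ?_
    rw [sub_one_mul, Complex.sub_re, ← Circle.coe_mul, ← AddChar.map_add_eq_mul, re_fourierChar,
      re_fourierChar, ← mul_add, add_comm D, mul_sub]
  have total : 2 * π ^ 2 * ∑ i ∈ S, (sawtoothPrimitive (f i + D) - sawtoothPrimitive (f i))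
      = ∑ i ∈ S, (2 * π ^ 2 * (sawtoothPrimitive (f i + D) + 1 / 12)
        - 2 * π ^ 2 * (sawtoothPrimitive (f i) + 1 / 12)) := by
    rw [Finset.mul_sum]
    exact Finset.sum_congr rfl fun i _ ↦ by ring
  simp only [termwise, total]
  exact hasSum_sum fun i _ ↦ (hasSum_cos_sawtoothPrimitive _).sub (hasSum_cos_sawtoothPrimitive _)

lemma one_div_sqrt_add_one_le {x : ℝ} (hx : 0 ≤ x) :
    1 / √(x + 1) ≤ 2 * √(x + 1) - 2 * √x := by
  have h_pos : 0 < √(x + 1) := by positivity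
  rw [div_le_iff₀ h_pos]
  nlinarith [sq_sqrt hx, sq_sqrt (by linarith : 0 ≤ x + 1), sq_nonneg (√(x + 1) - √x)]

lemma one_div_mul_sqrt_add_one_le {x : ℝ} (hx : 0 < x) :
    1 / ((x + 1) * √(x + 1)) ≤ 2 / √x - 2 / √(x + 1) := by
  have : 0 < √x := by positivity
  have : 0 < √(x + 1) := by positivity
  have hpq : √x ≤ √(x + 1) := sqrt_le_sqrt (by linarith)
  calc 1 / ((x + 1) * √(x + 1)) = 1 / √(x + 1) / (√(x + 1) * √(x + 1)) := by
        rw [mul_self_sqrt (by linarith)]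
        field_simp
    _ ≤ (2 * √(x + 1) - 2 * √x) / (√x * √(x + 1)) := by
        have := one_div_sqrt_add_one_le hx.le
        have : 0 ≤ 1 / √(x + 1) := by positivity
        gcongr
        linarith
    _ = 2 / √x - 2 / √(x + 1) := by field_simp

lemma sum_range_one_div_sqrt_le (K : ℕ) :
    ∑ n ∈ Finset.range K, 1 / √(n + 1 : ℝ) ≤ 2 * √K := by
  calc _ ≤ ∑ n ∈ Finset.range K, (2 * √(n + 1 : ℕ) - 2 * √n) :=
        Finset.sum_le_sum fun n _ ↦ mod_cast one_div_sqrt_add_one_le n.cast_nonneg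
    _ = 2 * √K := by rw [Finset.sum_range_sub (fun n : ℕ ↦ 2 * √(n : ℝ))]; simp

lemma sum_range_one_div_mul_sqrt_le {H : ℕ} (hH : 0 < H) (K : ℕ) :
    ∑ n ∈ Finset.range K, 1 / ((H + n + 1) * √(H + n + 1 : ℝ)) ≤ 2 / √H := by
  calc _ ≤ ∑ n ∈ Finset.range K, (2 / √(H + n : ℕ) - 2 / √(H + (n + 1) : ℕ)) := by
        refine Finset.sum_le_sum fun n _ ↦ ?_
        have := one_div_mul_sqrt_add_one_le (x := H + n) (by positivity)
        push_cast [← add_assoc]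
        exact this
    _ = 2 / √H - 2 / √(H + K : ℕ) := by
        rw [Finset.sum_range_sub' (fun n : ℕ ↦ 2 / √(H + n : ℕ))]; simp
    _ ≤ 2 / √H := sub_le_self _ (by positivity)

lemma abs_le_of_hasSum_of_abs_le {a : ℕ → ℝ} {s p q : ℝ} {H : ℕ} (ha : HasSum a s) (ha₀ : a 0 = 0)
    (hH : 0 < H) (hp : ∀ n < H, |a (n + 1)| ≤ p * (1 / √(n + 1 : ℝ)))
    (hq : ∀ n, |a (H + n + 1)| ≤ q * (1 / ((H + n + 1) * √(H + n + 1 : ℝ)))) :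
    |s| ≤ p * (2 * √H) + q * (2 / √H) := by
  have hp₀ : 0 ≤ p := by simpa using (abs_nonneg _).trans (hp 0 hH)
  have hq₀ : 0 ≤ q := nonneg_of_mul_nonneg_left ((abs_nonneg _).trans (hq 0)) (by positivity)
  have shifted : HasSum (fun n ↦ a (n + 1)) s := by
    simpa [ha₀] using (hasSum_nat_add_iff' 1).2 ha
  refine le_of_tendsto ((shifted.tendsto_sum_nat.comp (Filter.tendsto_add_atTop_nat H)).abs)
    (.of_forall fun K ↦ ?_)
  rw [Function.comp_apply, add_comm K, Finset.sum_range_add]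
  have head_le : |∑ n ∈ Finset.range H, a (n + 1)|
      ≤ ∑ n ∈ Finset.range H, p * (1 / √(n + 1 : ℝ)) :=
    (Finset.abs_sum_le_sum_abs _ _).trans
      (Finset.sum_le_sum fun n hn ↦ hp n (Finset.mem_range.1 hn))
  have tail_le : |∑ n ∈ Finset.range K, a (H + n + 1)|
      ≤ ∑ n ∈ Finset.range K, q * (1 / ((H + n + 1) * √(H + n + 1 : ℝ))) :=
    (Finset.abs_sum_le_sum_abs _ _).trans (Finset.sum_le_sum fun n _ ↦ hq n)
  refine (abs_add_le _ _).trans ((add_le_add head_le tail_le).trans ?_)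
  rw [← Finset.mul_sum, ← Finset.mul_sum]
  gcongr
  exacts [sum_range_one_div_sqrt_le H, sum_range_one_div_mul_sqrt_le hH K]

variable {ι : Type*} {S : Finset ι} {f : ι → ℝ} {B : ℝ} {H : ℕ}

lemma abs_sum_sawtoothPrimitive_add_sub_le
    (hB : ∀ h : ℕ, 1 ≤ h → ‖∑ i ∈ S, (𝐞 (h * f i) : ℂ)‖ ≤ B * √h) (hH : 0 < H) {D : ℝ}
    (hD : |D| = 1 / H) :
    |∑ i ∈ S, (sawtoothPrimitive (f i + D) - sawtoothPrimitive (f i))| ≤ B / √H := by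
  have hB₀ : 0 ≤ B := by simpa using (norm_nonneg _).trans (hB 1 le_rfl)
  have term_le (n : ℕ) {r : ℝ} (hr : ‖(𝐞 ((n + 1 : ℕ) * D) : ℂ) - 1‖ ≤ r) :
      |1 / ((n + 1 : ℕ) : ℝ) ^ 2 * (((𝐞 ((n + 1 : ℕ) * D) : ℂ) - 1) *
        ∑ i ∈ S, (𝐞 ((n + 1 : ℕ) * f i) : ℂ)).re| ≤ r * B * (1 / ((n + 1) * √(n + 1))) := by
    rw [abs_mul, abs_of_nonneg (by positivity : 0 ≤ 1 / ((n + 1 : ℕ) : ℝ) ^ 2)]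
    calc _ ≤ 1 / ((n + 1 : ℕ) : ℝ) ^ 2 * (r * (B * √(n + 1 : ℕ))) := by
          gcongr
          exact (Complex.abs_re_le_norm _).trans ((norm_mul_le _ _).trans
            (mul_le_mul hr (hB _ n.succ_pos) (norm_nonneg _) ((norm_nonneg _).trans hr)))
      _ = r * B * (√(n + 1) / (n + 1) / (n + 1)) := by push_cast; field_simp
      _ = r * B * (1 / ((n + 1) * √(n + 1))) := by rw [sqrt_div_self', div_div, mul_comm √_]
  have h_sum := abs_le_of_hasSum_of_abs_le (p := 2 * π * B / H) (q := 2 * B)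
    (hasSum_sum_sawtoothPrimitive_add_sub S f D) (by simp) hH
    (fun n _ ↦ by
      refine (term_le n (norm_fourierChar_sub_one_le _)).trans_eq ?_
      rw [abs_mul, hD, Nat.abs_cast]
      push_cast
      field_simp)
    (fun n ↦ by
      have norm_le_two (t : ℝ) : ‖(𝐞 t : ℂ) - 1‖ ≤ 2 :=
        (norm_sub_le _ _).trans_eq (by rw [Circle.norm_coe, norm_one]; norm_num)
      simpa using term_le (H + n) (norm_le_two _))
  rw [abs_mul, abs_of_nonneg (by positivity : 0 ≤ 2 * π ^ 2)] at h_sum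
  refine le_of_mul_le_mul_left (h_sum.trans ?_) (by positivity : 0 < 2 * π ^ 2)
  have : 0 ≤ B / √H := by positivity
  calc 2 * π * B / H * (2 * √H) + 2 * B * (2 / √H) = (4 * π * (√H / H) + 4 / √H) * B := by ring
    _ = (4 * π + 4) * (B / √H) := by rw [sqrt_div_self']; ring
    _ ≤ 2 * π ^ 2 * (B / √H) := by
        gcongr
        nlinarith [pi_gt_three]

theorem abs_sum_fract_sub_half_le
    (hB : ∀ h : ℕ, 1 ≤ h → ‖∑ i ∈ S, (𝐞 (h * f i) : ℂ)‖ ≤ B * √h) (hH : 0 < H) :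
    |∑ i ∈ S, (Int.fract (f i) - 1 / 2)| ≤ S.card / (2 * H) + B * √H := by
  have sum_le (D : ℝ) : ∑ i ∈ S, (sawtoothPrimitive (f i + D) - sawtoothPrimitive (f i))
      ≤ D * ∑ i ∈ S, (Int.fract (f i) - 1 / 2) + S.card * (D ^ 2 / 2) := by
    rw [Finset.mul_sum, ← nsmul_eq_mul, ← Finset.sum_const, ← Finset.sum_add_distrib]
    exact Finset.sum_le_sum fun i _ ↦ sawtoothPrimitive_add_sub_le _ _
  have hH' : (0 : ℝ) < 1 / H := by positivity
  have upper := (neg_le_of_abs_le (abs_sum_sawtoothPrimitive_add_sub_le hB hH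
    (by rw [abs_neg, abs_of_pos hH']))).trans (sum_le (-(1 / H)))
  have lower := (neg_le_of_abs_le (abs_sum_sawtoothPrimitive_add_sub_le hB hH
    (abs_of_pos hH'))).trans (sum_le (1 / H))
  have scale : H * (B / √H) = B * √H := by rw [mul_div_left_comm, div_sqrt]
  have half : (S.card : ℝ) / (2 * H) = H * (S.card * ((1 / H) ^ 2 / 2)) := by field_simp
  have cancel (s : ℝ) : H * (1 / H * s) = s := by field_simp
  rw [neg_sq, neg_mul] at upper
  rw [half, ← scale, ← mul_add, abs_le]
  rw [← cancel (∑ i ∈ S, (Int.fract (f i) - 1 / 2)), ← mul_neg]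
  constructor <;> gcongr <;> linarith

end Sawtooth

section SecondDerivative

variable {f f' f'' : ℝ → ℝ}

lemma exists_fwdDiff_eq_of_hasDerivAt {a : ℝ}
    (hf : ∀ t ∈ Set.Icc a (a + 1), HasDerivAt f (f' t) t) :
    ∃ ξ ∈ Set.Ioo a (a + 1), Δ_[1] f a = f' ξ := by
  obtain ⟨ξ, hξ, h⟩ := exists_hasDerivAt_eq_slope f f' (lt_add_one a)
    (fun t ht ↦ (hf t ht).continuousAt.continuousWithinAt)
    (fun t ht ↦ hf t (Set.Ioo_subset_Icc_self ht))
  exact ⟨ξ, hξ, by rw [h, add_sub_cancel_left, div_one, fwdDiff]⟩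

lemma exists_fwdDiff_fwdDiff_eq_of_hasDerivAt {a : ℝ}
    (hf : ∀ t ∈ Set.Icc a (a + 2), HasDerivAt f (f' t) t)
    (hf' : ∀ t ∈ Set.Icc a (a + 2), HasDerivAt f' (f'' t) t) :
    ∃ ξ ∈ Set.Icc a (a + 2), Δ_[1] (Δ_[1] f) a = f'' ξ := by
  obtain ⟨η, hη, h₁⟩ := exists_fwdDiff_eq_of_hasDerivAt (f := Δ_[1] f) (f' := Δ_[1] f') (a := a)
    fun t ht ↦ ((hf (t + 1) ⟨by linarith [ht.1], by linarith [ht.2]⟩).comp_add_const t 1).sub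
      (hf t ⟨ht.1, by linarith [ht.2]⟩)
  obtain ⟨ξ, hξ, h₂⟩ := exists_fwdDiff_eq_of_hasDerivAt (f := f') (f' := f'') (a := η)
    fun t ht ↦ hf' t ⟨by linarith [ht.1, hη.1], by linarith [ht.2, hη.2]⟩
  exact ⟨ξ, ⟨by linarith [hξ.1, hη.1], by linarith [hξ.2, hη.2]⟩, h₁.trans h₂⟩

theorem norm_sum_fourierChar_le_of_hasDerivAt {N : ℕ} {l u : ℝ} (hl : 0 < l)
    (hf : ∀ t ∈ Set.Icc 0 (N : ℝ), HasDerivAt f (f' t) t)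
    (hf' : ∀ t ∈ Set.Icc 0 (N : ℝ), HasDerivAt f' (f'' t) t)
    (hf'' : ∀ t ∈ Set.Icc 0 (N : ℝ), f'' t ∈ Set.Icc l u) :
    ‖∑ n ∈ Finset.range N, (𝐞 (f n) : ℂ)‖ ≤ (u * N + 2) * (4 / √l) := by
  have hlu : l ≤ u := (hf'' 0 ⟨le_rfl, N.cast_nonneg⟩).1.trans (hf'' 0 ⟨le_rfl, N.cast_nonneg⟩).2
  refine norm_sum_fourierChar_le_of_fwdDiff_fwdDiff_mem_Icc (f := fun n ↦ f n) hl hlu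
    fun n hn ↦ ?_
  have subset : Set.Icc (n : ℝ) (n + 2) ⊆ Set.Icc 0 N :=
    Set.Icc_subset_Icc n.cast_nonneg (mod_cast hn)
  obtain ⟨ξ, hξ, h⟩ := exists_fwdDiff_fwdDiff_eq_of_hasDerivAt
    (fun t ht ↦ hf t (subset ht)) (fun t ht ↦ hf' t (subset ht))
  have cast : Δ_[1] (Δ_[1] fun n : ℕ ↦ f n) n = Δ_[1] (Δ_[1] f) n := by simp [fwdDiff]
  exact cast ▸ h ▸ hf'' ξ (subset hξ)

lemma norm_sum_fourierChar_neg {ι : Type*} (S : Finset ι) (g : ι → ℝ) :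
    ‖∑ i ∈ S, (𝐞 (-g i) : ℂ)‖ = ‖∑ i ∈ S, (𝐞 (g i) : ℂ)‖ := by
  simp_rw [AddChar.map_neg_eq_inv, Circle.coe_inv_eq_conj, ← map_sum, RCLike.norm_conj]

theorem abs_sum_fract_sub_half_le_of_hasDerivAt {N H : ℕ} {l u : ℝ} (hl : 0 < l) (hH : 0 < H)
    (hf : ∀ t ∈ Set.Icc 0 (N : ℝ), HasDerivAt f (f' t) t)
    (hf' : ∀ t ∈ Set.Icc 0 (N : ℝ), HasDerivAt f' (-f'' t) t)
    (hf'' : ∀ t ∈ Set.Icc 0 (N : ℝ), f'' t ∈ Set.Icc l u) :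
    |∑ n ∈ Finset.range N, (Int.fract (f n) - 1 / 2)|
      ≤ N / (2 * H) + (u * N + 2) * (4 / √l) * √H := by
  nth_rewrite 2 [← Finset.card_range N]
  refine abs_sum_fract_sub_half_le (fun h h_pos ↦ ?_) hH
  have h_one : (1 : ℝ) ≤ h := mod_cast h_pos
  rw [← norm_sum_fourierChar_neg]
  calc ‖∑ n ∈ Finset.range N, (𝐞 (-(h * f n)) : ℂ)‖
      ≤ (h * u * N + 2) * (4 / √(h * l)) :=
        norm_sum_fourierChar_le_of_hasDerivAt (f := fun t ↦ -(h * f t)) (by positivity)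
          (fun t ht ↦ ((hf t ht).const_mul (h : ℝ)).neg)
          (fun t ht ↦ ((hf' t ht).const_mul (h : ℝ)).neg)
          fun t ht ↦ by
            rw [mul_neg, neg_neg]
            exact ⟨by gcongr; exact (hf'' t ht).1, by gcongr; exact (hf'' t ht).2⟩
    _ ≤ (h * u * N + h * 2) * (4 / √(h * l)) := by gcongr; linarith
    _ = (u * N + 2) * (4 / √l) * (h / √h) := by rw [sqrt_mul (by positivity)]; ring
    _ = (u * N + 2) * (4 / √l) * √h := by rw [div_sqrt]

lemma abs_trapezoid_sub_le {F : ℝ → ℝ} {a K : ℝ}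
    (hF : ∀ t ∈ Set.Icc a (a + 1), HasDerivAt F (f t) t)
    (hf : ∀ t ∈ Set.Icc a (a + 1), HasDerivAt f (f' t) t)
    (hf' : ∀ t ∈ Set.Icc a (a + 1), HasDerivAt f' (f'' t) t)
    (hf'' : ∀ t ∈ Set.Icc a (a + 1), |f'' t| ≤ K) :
    |(f a + f (a + 1)) / 2 - (F (a + 1) - F a)| ≤ K / 2 := by
  have hK : 0 ≤ K := (abs_nonneg _).trans (hf'' a (by simp))
  have deriv_le (t : ℝ) (ht : t ∈ Set.Icc a (a + 1)) : |f t + (a - t) * f' t - f a| ≤ K := by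
    have subset : Set.Icc a t ⊆ Set.Icc a (a + 1) := Set.Icc_subset_Icc_right ht.2
    have h := (convex_Icc a t).norm_image_sub_le_of_norm_hasDerivWithin_le
      (f := fun s ↦ f s + (a - s) * f' s) (f' := fun s ↦ (a - s) * f'' s) (C := K)
      (fun s hs ↦ (((hf s (subset hs)).add (((hasDerivAt_id' s).const_sub a).mul
        (hf' s (subset hs)))).congr_deriv (by ring)).hasDerivWithinAt)
      (fun s hs ↦ by
        rw [norm_mul, norm_eq_abs, norm_eq_abs]
        refine (mul_le_of_le_one_left (abs_nonneg _) ?_).trans (hf'' s (subset hs))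
        exact abs_le.2 ⟨by linarith [(subset hs).2], by linarith [hs.1]⟩)
      (Set.left_mem_Icc.2 ht.1) (Set.right_mem_Icc.2 ht.1)
    rw [sub_self, zero_mul, add_zero, norm_eq_abs, norm_of_nonneg (sub_nonneg.2 ht.1)] at h
    exact h.trans (mul_le_of_le_one_right hK (by linarith [ht.2]))
  have h := (convex_Icc a (a + 1)).norm_image_sub_le_of_norm_hasDerivWithin_le
    (f := fun t ↦ (t - a) * (f a + f t) / 2 - F t)
    (f' := fun t ↦ -(f t + (a - t) * f' t - f a) / 2) (C := K / 2)
    (fun t ht ↦ ((((((hasDerivAt_id' t).sub_const a).mul ((hf t ht).const_add (f a))).div_const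
      2).sub (hF t ht)).congr_deriv (by ring)).hasDerivWithinAt)
    (fun t ht ↦ by
      rw [norm_div, norm_neg, norm_two]
      gcongr
      exact deriv_le t ht)
    (Set.left_mem_Icc.2 (by simp)) (Set.right_mem_Icc.2 (by simp))
  convert h using 1
  · rw [norm_eq_abs]
    congr 1
    ring
  · simp

lemma abs_sum_range_sub_le {F : ℝ → ℝ} {N : ℕ} {K : ℝ}
    (hF : ∀ t ∈ Set.Icc 0 (N : ℝ), HasDerivAt F (f t) t)
    (hf : ∀ t ∈ Set.Icc 0 (N : ℝ), HasDerivAt f (f' t) t)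
    (hf' : ∀ t ∈ Set.Icc 0 (N : ℝ), HasDerivAt f' (f'' t) t)
    (hf'' : ∀ t ∈ Set.Icc 0 (N : ℝ), |f'' t| ≤ K) :
    |∑ n ∈ Finset.range N, f n - (F N - F 0 - (f N - f 0) / 2)| ≤ N * (K / 2) := by
  have telescope : ∑ n ∈ Finset.range N, f n - (F N - F 0 - (f N - f 0) / 2)
      = ∑ n ∈ Finset.range N, ((f n + f (n + 1)) / 2 - (F (n + 1) - F n)) := by
    have h (g : ℝ → ℝ) : g N - g 0 = ∑ n ∈ Finset.range N, (g (n + 1) - g n) := by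
      simpa using (Finset.sum_range_sub (fun n : ℕ ↦ g n) N).symm
    rw [h F, h f, Finset.sum_div, ← Finset.sum_sub_distrib, ← Finset.sum_sub_distrib]
    exact Finset.sum_congr rfl fun n _ ↦ by ring
  rw [telescope, ← nsmul_eq_mul]
  nth_rewrite 2 [← Finset.card_range N]
  rw [← Finset.sum_const]
  refine (Finset.abs_sum_le_sum_abs _ _).trans (Finset.sum_le_sum fun n hn ↦ ?_)
  have subset : Set.Icc (n : ℝ) (n + 1) ⊆ Set.Icc 0 N :=
    Set.Icc_subset_Icc n.cast_nonneg (mod_cast Finset.mem_range.1 hn)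
  exact abs_trapezoid_sub_le (fun t ht ↦ hF t (subset ht)) (fun t ht ↦ hf t (subset ht))
    (fun t ht ↦ hf' t (subset ht)) (fun t ht ↦ hf'' t (subset ht))

end SecondDerivative

section Circle

variable {x u : ℝ}

lemma hasDerivAt_sqrt_sub_sq (hu : u ^ 2 < x) :
    HasDerivAt (fun u ↦ √(x - u ^ 2)) (-u / √(x - u ^ 2)) u :=
  (((hasDerivAt_pow 2 u).const_sub x).sqrt (sub_pos.2 hu).ne').congr_deriv (by
    push_cast; field_simp)

lemma hasDerivAt_neg_div_sqrt_sub_sq (hu : u ^ 2 < x) :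
    HasDerivAt (fun u ↦ -u / √(x - u ^ 2)) (-(x / √(x - u ^ 2) ^ 3)) u := by
  have h_pos : 0 < √(x - u ^ 2) := sqrt_pos.2 (sub_pos.2 hu)
  refine ((hasDerivAt_neg' u).div (hasDerivAt_sqrt_sub_sq hu) h_pos.ne').congr_deriv ?_
  field_simp
  linarith [sq_sqrt (sub_pos.2 hu).le]

/-- The area under the quarter circle `v ↦ √(x - v ^ 2)` of radius `√x` between `0` and `u`. -/
noncomputable def circleSegmentArea (x u : ℝ) : ℝ := (u * √(x - u ^ 2) + x * arcsin (u / √x)) / 2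

lemma hasDerivAt_circleSegmentArea (hu : u ^ 2 < x) :
    HasDerivAt (circleSegmentArea x) √(x - u ^ 2) u := by
  have hx : 0 < x := (sq_nonneg u).trans_lt hu
  have h_pos : 0 < √(x - u ^ 2) := sqrt_pos.2 (sub_pos.2 hu)
  have h_sq : (u / √x) ^ 2 < 1 := by rwa [div_pow, sq_sqrt hx.le, div_lt_one hx]
  have h_abs := abs_lt.1 ((sq_lt_one_iff_abs_lt_one _).1 h_sq)
  have h_arcsin : √(1 - (u / √x) ^ 2) = √(x - u ^ 2) / √x := by
    rw [div_pow, sq_sqrt hx.le, one_sub_div hx.ne', sqrt_div (sub_pos.2 hu).le]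
  refine ((((hasDerivAt_id' u).mul (hasDerivAt_sqrt_sub_sq hu)).add
    (((hasDerivAt_arcsin h_abs.1.ne' h_abs.2.ne).comp u
      ((hasDerivAt_id' u).div_const √x)).const_mul x)).div_const 2).congr_deriv ?_
  rw [h_arcsin]
  field_simp
  linarith [sq_sqrt (sub_pos.2 hu).le]

lemma circleSegmentArea_zero (x : ℝ) : circleSegmentArea x 0 = 0 := by
  simp [circleSegmentArea]

lemma circleSegmentArea_sqrt_half (hx : 0 < x) :
    circleSegmentArea x √(x / 2) = x / 4 + π / 8 * x := by
  have h_sqrt : √(x - √(x / 2) ^ 2) = √(x / 2) := by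
    rw [sq_sqrt (by positivity), sub_half]
  have h_arcsin : arcsin (√(x / 2) / √x) = π / 4 := by
    refine arcsin_eq_of_sin_eq ?_ ⟨by linarith [pi_pos], by linarith [pi_pos]⟩
    rw [sin_pi_div_four, sqrt_div hx.le, div_right_comm, div_self (sqrt_pos.2 hx).ne',
      sqrt_div_self']
  rw [circleSegmentArea, h_sqrt, h_arcsin, mul_self_sqrt (by positivity)]
  ring

lemma div_sqrt_sub_sq_pow_three_mem_Icc (hx : 0 < x) (hu : 2 * u ^ 2 ≤ x) :
    x / √(x - u ^ 2) ^ 3 ∈ Set.Icc (1 / √x) (3 / √x) := by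
  have hw : 0 < √(x - u ^ 2) := sqrt_pos.2 (by linarith)
  have hws : √(x - u ^ 2) ≤ √x := sqrt_le_sqrt (by linarith [sq_nonneg u])
  have hsw : √x ^ 2 ≤ 2 * √(x - u ^ 2) ^ 2 := by
    rw [sq_sqrt hx.le, sq_sqrt (by linarith)]
    linarith
  have hsw' : √x ≤ 3 / 2 * √(x - u ^ 2) := by nlinarith
  rw [show x / √(x - u ^ 2) ^ 3 = √x ^ 2 / √(x - u ^ 2) ^ 3 by rw [sq_sqrt hx.le]]
  generalize √x = s at *
  generalize √(x - u ^ 2) = w at *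
  have hs : 0 < s := hw.trans_le hws
  constructor <;> rw [div_le_div_iff₀ (by positivity) (by positivity)]
  · calc 1 * w ^ 3 ≤ s ^ 3 := by rw [one_mul]; gcongr
      _ = s ^ 2 * s := by ring
  · calc s ^ 2 * s ≤ 2 * w ^ 2 * (3 / 2 * w) := by gcongr
      _ = 3 * w ^ 3 := by ring

lemma abs_circleSegmentArea_sqrt_half_sub_le {v : ℝ} (hx : 0 < x) (hv : 0 ≤ v) (hvx : v ≤ √(x / 2))
    (hxv : √(x / 2) ≤ v + 1) :
    |circleSegmentArea x √(x / 2) - circleSegmentArea x v - √(x / 2) * (√(x / 2) - v)| ≤ 1 := by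
  set y := √(x / 2) with hy
  have hxy : x = 2 * y ^ 2 := by rw [hy, sq_sqrt (by positivity)]; ring
  have h := (convex_Icc v y).norm_image_sub_le_of_norm_hasDerivWithin_le
    (f := fun u ↦ circleSegmentArea x u - y * u) (f' := fun u ↦ √(x - u ^ 2) - y) (C := 1)
    (fun u hu ↦ ((hasDerivAt_circleSegmentArea (by nlinarith [hu.1, hu.2])).sub
      ((hasDerivAt_id' u).const_mul y)).congr_deriv (by ring) |>.hasDerivWithinAt)
    (fun u hu ↦ by
      have lower : y ≤ √(x - u ^ 2) := le_sqrt_of_sq_le (by nlinarith [hu.1, hu.2])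
      have upper : √(x - u ^ 2) ≤ y + 1 := sqrt_le_iff.2 ⟨by linarith, by nlinarith [hu.1, hu.2]⟩
      rw [norm_eq_abs, abs_of_nonneg (by linarith)]
      linarith)
    (Set.left_mem_Icc.2 hvx) (Set.right_mem_Icc.2 hvx)
  rw [norm_eq_abs, norm_of_nonneg (by linarith)] at h
  calc _ = |circleSegmentArea x y - y * y - (circleSegmentArea x v - y * v)| := by congr 1; ring
    _ ≤ 1 := by linarith

lemma abs_sum_sqrt_sub_sq_sub_le (hx : 0 < x) {M : ℕ} (hM : M = ⌊√(x / 2)⌋₊) :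
    |2 * ∑ n ∈ Finset.range M, √(x - n ^ 2) + 2 * √(x - M ^ 2) - √x - M - M ^ 2 - π / 4 * x|
      ≤ 8 := by
  have hMy : M ≤ √(x / 2) := hM ▸ Nat.floor_le (sqrt_nonneg _)
  have hyM : √(x / 2) ≤ M + 1 := hM ▸ (Nat.lt_floor_add_one _).le
  have h_sq {t : ℝ} (ht : t ∈ Set.Icc 0 (M : ℝ)) : 2 * t ^ 2 ≤ x := by
    have := (le_sqrt ht.1 (by positivity)).1 (ht.2.trans hMy)
    linarith
  have h_lt {t : ℝ} (ht : t ∈ Set.Icc 0 (M : ℝ)) : t ^ 2 < x := by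
    nlinarith [h_sq ht]
  have h_sum := abs_sum_range_sub_le (fun t ht ↦ hasDerivAt_circleSegmentArea (h_lt ht))
    (fun t ht ↦ hasDerivAt_sqrt_sub_sq (h_lt ht))
    (fun t ht ↦ hasDerivAt_neg_div_sqrt_sub_sq (h_lt ht)) (K := 3 / √x)
    (fun t ht ↦ by
      rw [abs_neg, abs_of_nonneg (by positivity)]
      exact (div_sqrt_sub_sq_pow_three_mem_Icc hx (h_sq ht)).2)
  have h_area := abs_circleSegmentArea_sqrt_half_sub_le hx M.cast_nonneg hMy hyM
  rw [circleSegmentArea_sqrt_half hx] at h_area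
  have h_error : M * (3 / √x / 2) ≤ 3 / 2 := by
    have : (M : ℝ) ≤ √x := hMy.trans (sqrt_le_sqrt (by linarith))
    rw [← mul_div_assoc, ← mul_div_assoc]
    gcongr
    rw [div_le_iff₀ (sqrt_pos.2 hx)]
    linarith
  have h_half : √(x / 2) ^ 2 = x / 2 := sq_sqrt (by positivity)
  have h_last : √(x - M ^ 2) ∈ Set.Icc √(x / 2) (√(x / 2) + 1) :=
    ⟨le_sqrt_of_sq_le (by nlinarith), sqrt_le_iff.2 ⟨by positivity, by nlinarith⟩⟩
  have h_gap : (√(x / 2) - M) ^ 2 ≤ 1 := by nlinarith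
  rw [circleSegmentArea_zero, zero_pow two_ne_zero, sub_zero, sub_zero] at h_sum
  obtain ⟨sum_lower, sum_upper⟩ := abs_le.1 (h_sum.trans h_error)
  obtain ⟨area_lower, area_upper⟩ := abs_le.1 h_area
  rw [abs_le]
  constructor <;> nlinarith [h_last.1, h_last.2, sq_nonneg (√(x / 2) - M)]

/-- The lattice points of the disc `a ^ 2 + b ^ 2 ≤ x` in the half-open quadrant `0 < a`, `0 ≤ b`.
Its four rotations by a right angle partition the nonzero lattice points of the disc. -/
def quadrantPoints (x : ℝ) : Set (ℕ × ℕ) := {p | 0 < p.1 ∧ (p.1 ^ 2 + p.2 ^ 2 : ℝ) ≤ x}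

lemma mem_quadrantPoints_iff_le_floor {a b : ℕ} :
    (a, b) ∈ quadrantPoints x ↔ 0 < a ∧ a ≤ ⌊√(x - b ^ 2)⌋₊ := by
  refine and_congr_right fun ha ↦ ?_
  rw [Nat.le_floor_iff' ha.ne', le_sqrt' (by positivity), le_sub_iff_add_le]

lemma mem_quadrantPoints_comm {a b : ℕ} (ha : 0 < a) (hb : 0 < b) :
    (a, b) ∈ quadrantPoints x ↔ (b, a) ∈ quadrantPoints x := by
  simp only [quadrantPoints, Set.mem_ofPred_eq, ha, hb, true_and, add_comm]

lemma le_floor_sqrt_half {a b : ℕ} (hab : (a, b) ∈ quadrantPoints x) (hb : ⌊√(x / 2)⌋₊ < b) :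
    a ≤ ⌊√(x / 2)⌋₊ := by
  have hb_pos : 0 < b := by lia
  have h := (sqrt_lt' (by positivity)).1 (Nat.lt_of_floor_lt hb)
  exact Nat.le_floor (le_sqrt_of_sq_le (by linarith [hab.2]))

lemma floor_sqrt_half_le {a : ℕ} (ha : a ≤ ⌊√(x / 2)⌋₊) :
    ⌊√(x / 2)⌋₊ ≤ ⌊√(x - a ^ 2)⌋₊ := by
  rcases ⌊√(x / 2)⌋₊.eq_zero_or_pos with h | h
  · exact h.le.trans (Nat.zero_le _)
  refine Nat.floor_mono (sqrt_le_sqrt ?_)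
  have := (le_sqrt (by positivity) (sqrt_pos.1 (Nat.pos_of_floor_pos h)).le).1
    ((Nat.le_floor_iff (sqrt_nonneg _)).1 ha)
  linarith

lemma quadrantPoints_eq_union {M : ℕ} (hM : M = ⌊√(x / 2)⌋₊) :
    quadrantPoints x =
      (((Finset.range (M + 1)).sigma fun b ↦ Finset.Icc 1 ⌊√(x - b ^ 2)⌋₊).image
          (fun p ↦ (p.2, p.1)) ∪
        ((Finset.range M).sigma fun a ↦ Finset.Ioc M ⌊√(x - (a + 1 : ℕ) ^ 2)⌋₊).image
          (fun p ↦ (p.1 + 1, p.2)) : Finset (ℕ × ℕ)) := by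
  ext ⟨a, b⟩
  simp only [Finset.coe_union, Finset.coe_image, Set.mem_union, Set.mem_image, SetLike.mem_coe,
    Finset.mem_sigma, Finset.mem_range, Finset.mem_Icc, Finset.mem_Ioc, Prod.mk.injEq]
  constructor
  · intro h
    rcases lt_or_ge M b with hb | hb
    · have ha : a ≤ M := hM ▸ le_floor_sqrt_half h (hM ▸ hb)
      obtain ⟨a, rfl⟩ := Nat.exists_eq_add_one.2 h.1
      exact .inr ⟨⟨a, b⟩, ⟨by lia, hb, (mem_quadrantPoints_iff_le_floor.1
        ((mem_quadrantPoints_comm h.1 (by lia)).1 h)).2⟩, rfl, rfl⟩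
    · exact .inl ⟨⟨b, a⟩, ⟨by lia, mem_quadrantPoints_iff_le_floor.1 h⟩, rfl, rfl⟩
  · rintro (⟨⟨b, a⟩, ⟨-, h⟩, rfl, rfl⟩ | ⟨⟨a, b⟩, ⟨-, hb, h⟩, rfl, rfl⟩)
    · exact mem_quadrantPoints_iff_le_floor.2 h
    · exact (mem_quadrantPoints_comm a.succ_pos (by lia)).2
        (mem_quadrantPoints_iff_le_floor.2 ⟨by lia, h⟩)

theorem ncard_quadrantPoints_add {M : ℕ} (hM : M = ⌊√(x / 2)⌋₊) :
    (quadrantPoints x).ncard + M ^ 2 + ⌊√x⌋₊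
      = 2 * ∑ n ∈ Finset.range (M + 1), ⌊√(x - n ^ 2)⌋₊ := by
  rw [quadrantPoints_eq_union hM, Set.ncard_coe_finset, Finset.card_union_of_disjoint,
    Finset.card_image_of_injective, Finset.card_image_of_injective, Finset.card_sigma,
    Finset.card_sigma]
  · simp only [Nat.card_Icc, Nat.card_Ioc, add_tsub_cancel_right]
    have h_sub : ∑ n ∈ Finset.range M, (⌊√(x - (n + 1 : ℕ) ^ 2)⌋₊ - M) + M ^ 2
        = ∑ n ∈ Finset.range M, ⌊√(x - (n + 1 : ℕ) ^ 2)⌋₊ := by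
      rw [sq, ← smul_eq_mul]
      nth_rewrite 3 [← Finset.card_range M]
      rw [← Finset.sum_const, ← Finset.sum_add_distrib]
      refine Finset.sum_congr rfl fun n hn ↦ Nat.sub_add_cancel ?_
      exact hM ▸ floor_sqrt_half_le (hM ▸ Finset.mem_range.1 hn)
    rw [add_assoc _ _ (M ^ 2), h_sub, add_assoc, two_mul]
    congr 1
    rw [Finset.sum_range_succ' _ M]
    simp
  · rintro ⟨a, b⟩ ⟨c, d⟩ h
    simp_all
  · rintro ⟨a, b⟩ ⟨c, d⟩ h
    simp_all
  · rw [Finset.disjoint_left]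
    simp only [Finset.mem_image, Finset.mem_sigma, Finset.mem_range, Finset.mem_Ioc]
    rintro _ ⟨p, ⟨hp, -⟩, rfl⟩ ⟨q, ⟨-, hq, -⟩, hpq⟩
    have := congrArg Prod.snd hpq
    lia

lemma abs_sum_fract_sqrt_sub_sq_sub_half_le {r : ℝ} (hr : 1 ≤ r) {M : ℕ}
    (hM : M = ⌊√(r ^ 6 / 2)⌋₊) :
    |∑ n ∈ Finset.range M, (Int.fract √(r ^ 6 - n ^ 2) - 1 / 2)| ≤ 31 * r ^ 2 := by
  have h_sqrt : √(r ^ 6) = r ^ 3 := by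
    rw [show r ^ 6 = (r ^ 3) ^ 2 by ring, sqrt_sq (by positivity)]
  have hMy : M ≤ √(r ^ 6 / 2) := hM ▸ Nat.floor_le (sqrt_nonneg _)
  have hMr : M ≤ r ^ 3 := h_sqrt ▸ hMy.trans (sqrt_le_sqrt (half_le_self (by positivity)))
  have h_sq {t : ℝ} (ht : t ∈ Set.Icc 0 (M : ℝ)) : 2 * t ^ 2 ≤ r ^ 6 := by
    have := (le_sqrt ht.1 (by positivity)).1 (ht.2.trans hMy)
    linarith
  have h_lt {t : ℝ} (ht : t ∈ Set.Icc 0 (M : ℝ)) : t ^ 2 < r ^ 6 := by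
    nlinarith [h_sq ht, pow_pos (zero_lt_one.trans_le hr) 6]
  have h_ceil : r ≤ ⌈r⌉₊ := Nat.le_ceil r
  have h_ceil' : ⌈r⌉₊ ≤ 2 * r := by linarith [Nat.ceil_lt_add_one (zero_le_one.trans hr)]
  calc _ ≤ M / (2 * ⌈r⌉₊) + (3 / √(r ^ 6) * M + 2) * (4 / √(1 / √(r ^ 6))) * √⌈r⌉₊ :=
        abs_sum_fract_sub_half_le_of_hasDerivAt (by positivity)
          (Nat.ceil_pos.2 (by positivity)) (fun t ht ↦ hasDerivAt_sqrt_sub_sq (h_lt ht))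
          (fun t ht ↦ hasDerivAt_neg_div_sqrt_sub_sq (h_lt ht))
          (fun t ht ↦ div_sqrt_sub_sq_pow_three_mem_Icc (by positivity) (h_sq ht))
    _ = M / (2 * ⌈r⌉₊) + (3 / r ^ 3 * M + 2) * 4 * √(r ^ 3 * ⌈r⌉₊) := by
        rw [h_sqrt, one_div, sqrt_inv, div_inv_eq_mul, sqrt_mul (by positivity)]
        ring
    _ ≤ r ^ 3 / (2 * r) + (3 / r ^ 3 * r ^ 3 + 2) * 4 * √(r ^ 3 * (2 * r)) := by gcongr
    _ = r ^ 2 / 2 + 20 * √(r ^ 3 * (2 * r)) := by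
        field_simp
        ring
    _ ≤ r ^ 2 / 2 + 20 * (3 / 2 * r ^ 2) := by
        have : √(r ^ 3 * (2 * r)) ≤ 3 / 2 * r ^ 2 :=
          sqrt_le_iff.2 ⟨by positivity, by nlinarith [pow_pos (zero_lt_one.trans_le hr) 4]⟩
        gcongr
    _ ≤ 31 * r ^ 2 := by nlinarith

theorem abs_ncard_quadrantPoints_sub_le (hx : 1 ≤ x) :
    |(quadrantPoints x).ncard - π / 4 * x| ≤ 73 * x ^ (1 / 3 : ℝ) := by
  obtain ⟨r, hr, rfl⟩ : ∃ r, 1 ≤ r ∧ x = r ^ 6 :=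
    ⟨x ^ (1 / 6 : ℝ), one_le_rpow hx (by norm_num), by
      rw [← rpow_mul_natCast (by linarith)]; norm_num⟩
  have h_pow : (r ^ 6) ^ (1 / 3 : ℝ) = r ^ 2 := by
    rw [← rpow_natCast, ← rpow_mul (by linarith), ← rpow_natCast]; norm_num
  have cast_floor {t : ℝ} (ht : 0 ≤ t) : (⌊t⌋₊ : ℝ) = t - Int.fract t := by
    rw [natCast_floor_eq_intCast_floor ht, Int.self_sub_fract]
  set M := ⌊√(r ^ 6 / 2)⌋₊ with hM
  have h_count := congrArg (Nat.cast (R := ℝ)) (ncard_quadrantPoints_add hM)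
  have h_smooth := abs_le.1 (abs_sum_sqrt_sub_sq_sub_le (by positivity) hM)
  have h_sawtooth := abs_le.1 (abs_sum_fract_sqrt_sub_sq_sub_half_le hr hM)
  rw [Finset.sum_range_succ] at h_count
  push_cast [cast_floor (sqrt_nonneg _)] at h_count
  simp only [Finset.sum_sub_distrib, Finset.sum_const, Finset.card_range, nsmul_eq_mul]
    at h_count h_sawtooth
  have fract_mem (t : ℝ) : Int.fract t ∈ Set.Icc (0 : ℝ) 1 :=
    ⟨Int.fract_nonneg t, (Int.fract_lt_one t).le⟩
  have h_first := fract_mem √(r ^ 6)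
  have h_last := fract_mem √(r ^ 6 - M ^ 2)
  have h_one : 1 ≤ r ^ 2 := one_le_pow₀ hr
  rw [h_pow, abs_le]
  constructor <;> linarith [h_first.1, h_first.2, h_last.1, h_last.2, h_smooth.1, h_smooth.2,
    h_sawtooth.1, h_sawtooth.2]

end Circle

section ArithmeticSemigroup

open UniqueFactorizationMonoid (moebius moebius_one moebius_zero moebius_of_not_squarefree)

variable {α : Type*} [CommMonoidWithZero α]

lemma finite_setOf_ne_zero_and_le {N : α →*₀ ℕ} (hN : ∀ n, {a | N a ≤ n}.Finite) (x : ℝ) :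
    {a | a ≠ 0 ∧ (N a : ℝ) ≤ x}.Finite :=
  (hN ⌊x⌋₊).subset fun _ ha ↦ Nat.le_floor ha.2

/-- The nonzero elements of norm at most `x`, where `N` is a norm on the arithmetical semigroup of
nonzero elements of `α`. -/
noncomputable def normLE {N : α →*₀ ℕ} (hN : ∀ n, {a | N a ≤ n}.Finite) (x : ℝ) : Finset α :=
  (finite_setOf_ne_zero_and_le hN x).toFinset

variable {N : α →*₀ ℕ} (hN : ∀ n, {a | N a ≤ n}.Finite) {x : ℝ}

lemma mem_normLE {a : α} : a ∈ normLE hN x ↔ a ≠ 0 ∧ (N a : ℝ) ≤ x := by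
  simp [normLE]

variable {c K θ : ℝ} (hK : ∀ x, 1 ≤ x → |(normLE hN x).card - c * x| ≤ K * x ^ θ)

section Growth

include hK

lemma error_coeff_nonneg : 0 ≤ K := by
  simpa using (abs_nonneg _).trans (hK 1 le_rfl)

lemma card_normLE_le (hθ : θ ≤ 1) (hx : 1 ≤ x) : (normLE hN x).card ≤ (c + K) * x := by
  have := mul_le_mul_of_nonneg_left (rpow_le_self_of_one_le hx hθ) (error_coeff_nonneg hN hK)
  linarith [(abs_le.1 (hK x hx)).2]

lemma exists_pos_mul_le_card_normLE (hc : 0 < c) (hθ : θ < 1) :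
    ∃ δ, 0 < δ ∧ ∀ x, 1 ≤ x → δ * x ≤ (normLE hN x).card := by
  have main_dominates : ∀ᶠ x : ℝ in Filter.atTop, K * x ^ θ ≤ c / 2 * x := by
    have := (tendsto_rpow_neg_atTop (sub_pos.2 hθ)).const_mul K
    rw [mul_zero] at this
    filter_upwards [this.eventually_le_const (half_pos hc), Filter.eventually_gt_atTop 0] with
      x hx hx₀
    calc K * x ^ θ = K * x ^ (-(1 - θ)) * x := by
          rw [mul_assoc, ← rpow_add_one hx₀.ne']
          ring_nf
      _ ≤ c / 2 * x := by gcongr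
  obtain ⟨X, hX₁, hX⟩ := (main_dominates.and (Filter.eventually_ge_atTop 1)).exists_forall_of_atTop
    |>.imp fun X h ↦ And.intro (h X le_rfl).2 fun x hx ↦ (h x hx).1
  refine ⟨min (c / 2) X⁻¹, by positivity, fun x hx ↦ ?_⟩
  rcases le_total X x with hXx | hxX
  · calc min (c / 2) X⁻¹ * x ≤ c / 2 * x := by
          gcongr
          exact min_le_left _ _
      _ ≤ (normLE hN x).card := by linarith [(abs_le.1 (hK x hx)).1, hX x hXx]
  · have := domain_nontrivial N N.map_zero N.map_one
    have one_mem : 1 ∈ normLE hN x := (mem_normLE hN).2 ⟨one_ne_zero, by simpa using hx⟩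
    calc min (c / 2) X⁻¹ * x ≤ X⁻¹ * X := by
          gcongr
          exact min_le_right _ _
      _ = 1 := inv_mul_cancel₀ (by positivity)
      _ ≤ (normLE hN x).card := mod_cast Finset.card_pos.2 ⟨1, one_mem⟩

end Growth

variable [UniqueFactorizationMonoid α]

lemma abs_moebius_le_one (a : α) : |moebius a| ≤ 1 := by
  by_cases h : Squarefree a
  · simp [h.moebius_eq]
  · simp [moebius_of_not_squarefree h]

lemma summable_norm_moebius_div_sq (hs : Summable fun a ↦ 1 / (N a : ℝ) ^ 2) :
    Summable fun a ↦ ‖moebius a / (N a : ℝ) ^ 2‖ := by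
  refine hs.of_nonneg_of_le (fun a ↦ norm_nonneg _) fun a ↦ ?_
  rw [norm_div, norm_of_nonneg (by positivity : 0 ≤ (N a : ℝ) ^ 2), norm_eq_abs]
  gcongr
  exact mod_cast abs_moebius_le_one a

lemma moebius_mul_of_prime_dvd {p a : α} (hp : Prime p) (h : p ∣ a) : moebius (p * a) = 0 :=
  moebius_of_not_squarefree fun hsq ↦ hp.not_isUnit (hsq p (mul_dvd_mul_left p h))

lemma moebius_mul_of_not_prime_dvd {p a : α} (hp : Prime p) (h : ¬ p ∣ a) :
    moebius (p * a) = -moebius a := by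
  rw [((hp.irreducible.isRelPrime_iff_not_dvd).2 h).moebius_mul, hp.irreducible.moebius_eq,
    neg_one_mul]

variable [Subsingleton αˣ]

lemma sum_moebius_common_dvd {a b : α} (ha : a ≠ 0) {S : Finset α}
    (hS : ∀ d, d ∈ S ↔ d ∣ a ∧ d ∣ b) [Decidable (IsRelPrime a b)] :
    ∑ d ∈ S, moebius d = if IsRelPrime a b then 1 else 0 := by
  classical
  split_ifs with hab
  · have : S = {1} := by
      ext d
      rw [hS, Finset.mem_singleton, ← isUnit_iff_eq_one]
      exact ⟨fun h ↦ hab h.1 h.2, fun h ↦ ⟨h.dvd, h.dvd⟩⟩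
    rw [this, Finset.sum_singleton, moebius_one]
  · obtain ⟨p, hp, hpa, hpb⟩ : ∃ p, Prime p ∧ p ∣ a ∧ p ∣ b := by
      simp only [IsRelPrime, not_forall] at hab
      obtain ⟨d, hda, hdb, hd⟩ := hab
      obtain ⟨p, hp, hpd⟩ :=
        WfDvdMonoid.exists_irreducible_factor hd (ne_zero_of_dvd_ne_zero ha hda)
      exact ⟨p, hp.prime, hpd.trans hda, hpd.trans hdb⟩
    have p_mul_mem (d : α) (hd : d ∈ S.filter (¬ p ∣ ·)) : p * d ∈ S := by
      rw [Finset.mem_filter, hS] at hd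
      have hpd := hp.irreducible.isRelPrime_iff_not_dvd.2 hd.2
      exact (hS _).2 ⟨hpd.mul_dvd hpa hd.1.1, hpd.mul_dvd hpb hd.1.2⟩
    have sum_dvd : ∑ d ∈ S.filter (p ∣ ·), moebius d
        = ∑ d ∈ S.filter (¬ p ∣ ·), moebius (p * d) := by
      refine (Finset.sum_of_injOn (p * ·) (mul_right_injective₀ hp.ne_zero).injOn
        (fun d hd ↦ Finset.mem_filter.2 ⟨p_mul_mem d hd, dvd_mul_right p d⟩) ?_ fun _ _ ↦ rfl).symm
      intro d hd hd'
      obtain ⟨hdS, e, rfl⟩ := Finset.mem_filter.1 hd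
      refine moebius_mul_of_prime_dvd hp (not_not.1 fun he ↦ hd' ⟨e, ?_, rfl⟩)
      rw [hS] at hdS
      exact Finset.mem_filter.2
        ⟨(hS e).2 ⟨dvd_of_mul_left_dvd hdS.1, dvd_of_mul_left_dvd hdS.2⟩, he⟩
    rw [← Finset.sum_filter_add_sum_filter_not S (p ∣ ·), sum_dvd, ← Finset.sum_add_distrib]
    refine Finset.sum_eq_zero fun d hd ↦ ?_
    rw [moebius_mul_of_not_prime_dvd hp (Finset.mem_filter.1 hd).2, neg_add_cancel]

include hN in
lemma one_le_norm {a : α} (ha : a ≠ 0) : 1 ≤ N a := by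
  rw [Nat.one_le_iff_ne_zero]
  intro h
  have not_unit : ¬ IsUnit a := fun hu ↦ by simp [isUnit_iff_eq_one.1 hu] at h
  refine Set.infinite_of_injective_forall_mem
    ((pow_injective_of_not_isUnit not_unit ha).comp (add_left_injective 1)) (fun n ↦ ?_) (hN 0)
  simp [h]

lemma card_filter_dvd_normLE {d : α} (hd : d ≠ 0) [DecidablePred (d ∣ ·)] :
    ((normLE hN x).filter (d ∣ ·)).card = (normLE hN (x / N d)).card := by
  have : Function.Injective (d * ·) := mul_right_injective₀ hd
  have norm_pos : (0 : ℝ) < N d := mod_cast one_le_norm hN hd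
  rw [← Finset.card_map (s := normLE hN (x / N d)) ⟨_, this⟩]
  congr 1
  ext a
  simp only [Finset.mem_filter, Finset.mem_map, mem_normLE, Function.Embedding.coeFn_mk]
  constructor
  · rintro ⟨⟨ha, hx⟩, b, rfl⟩
    refine ⟨b, ⟨right_ne_zero_of_mul ha, ?_⟩, rfl⟩
    rwa [le_div_iff₀' norm_pos, ← Nat.cast_mul, ← map_mul]
  · rintro ⟨b, ⟨hb, hx⟩, rfl⟩
    rw [le_div_iff₀' norm_pos, ← Nat.cast_mul, ← map_mul] at hx
    exact ⟨⟨mul_ne_zero hd hb, hx⟩, dvd_mul_right d b⟩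

open scoped Classical in
/-- The number of ordered pairs of relatively prime elements of norm at most `x`. -/
noncomputable def relPrimeCount (x : ℝ) : ℕ :=
  ((normLE hN x ×ˢ normLE hN x).filter fun p ↦ IsRelPrime p.1 p.2).card

lemma mem_normLE_of_dvd {a d : α} (ha : a ∈ normLE hN x) (hd : d ∣ a) : d ∈ normLE hN x := by
  rw [mem_normLE] at ha ⊢
  exact ⟨ne_zero_of_dvd_ne_zero ha.1 hd, (Nat.cast_le.2 (Nat.le_of_dvd (one_le_norm hN ha.1)
    (map_dvd N hd))).trans ha.2⟩

lemma relPrimeCount_eq_sum (x : ℝ) :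
    (relPrimeCount hN x : ℤ)
      = ∑ d ∈ normLE hN x, moebius d * (normLE hN (x / N d)).card ^ 2 := by
  classical
  calc (relPrimeCount hN x : ℤ)
      = ∑ p ∈ normLE hN x ×ˢ normLE hN x, if IsRelPrime p.1 p.2 then 1 else 0 := by
        rw [relPrimeCount, Finset.card_filter]
        push_cast
        rfl
    _ = ∑ p ∈ normLE hN x ×ˢ normLE hN x, ∑ d ∈ normLE hN x with d ∣ p.1 ∧ d ∣ p.2, moebius d := by
        refine Finset.sum_congr rfl fun p hp ↦ ?_
        obtain ⟨h₁, -⟩ := Finset.mem_product.1 hp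
        exact (sum_moebius_common_dvd ((mem_normLE hN).1 h₁).1 fun d ↦ Finset.mem_filter.trans
          (and_iff_right_of_imp fun hd ↦ mem_normLE_of_dvd hN h₁ hd.1)).symm
    _ = ∑ d ∈ normLE hN x, ∑ p ∈ normLE hN x ×ˢ normLE hN x with d ∣ p.1 ∧ d ∣ p.2, moebius d :=
        Finset.sum_comm' (by simp; tauto)
    _ = _ := by
        refine Finset.sum_congr rfl fun d hd ↦ ?_
        rw [Finset.sum_const, Finset.filter_product, Finset.card_product,
          card_filter_dvd_normLE hN ((mem_normLE hN).1 hd).1, nsmul_eq_mul, mul_comm, sq]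
        push_cast
        rfl

lemma sum_norm_rpow_neg_le_of_log_eq {K s : ℝ} (hs : 0 ≤ s)
    (hK : ∀ x, 1 ≤ x → (normLE hN x).card ≤ K * x) {v : Finset α} {k : ℕ}
    (hv : ∀ a ∈ v, a ≠ 0 ∧ Nat.log 2 (N a) = k) :
    ∑ a ∈ v, (N a : ℝ) ^ (-s) ≤ 2 * K * (2 ^ (1 - s) : ℝ) ^ k := by
  have term_le (a : α) (ha : a ∈ v) : (N a : ℝ) ^ (-s) ≤ ((2 : ℝ) ^ k) ^ (-s) := by
    refine rpow_le_rpow_of_nonpos (by positivity) ?_ (by linarith)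
    exact mod_cast (hv a ha).2 ▸ Nat.pow_log_le_self 2
      (Nat.one_le_iff_ne_zero.1 (one_le_norm hN (hv a ha).1))
  have subset : v ⊆ normLE hN (2 ^ (k + 1)) := fun a ha ↦ (mem_normLE hN).2
    ⟨(hv a ha).1, mod_cast ((hv a ha).2 ▸ Nat.lt_pow_succ_log_self one_lt_two (N a)).le⟩
  calc _ ≤ (v.card : ℝ) * ((2 : ℝ) ^ k) ^ (-s) := by
        rw [← nsmul_eq_mul]
        exact Finset.sum_le_card_nsmul _ _ _ term_le
    _ ≤ K * 2 ^ (k + 1) * ((2 : ℝ) ^ k) ^ (-s) := by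
        gcongr
        exact (Nat.cast_le.2 (Finset.card_le_card subset)).trans (hK _ (one_le_pow₀ one_le_two))
    _ = 2 * K * (2 ^ (1 - s) : ℝ) ^ k := by
        rw [sub_eq_add_neg, rpow_add two_pos, rpow_one, mul_pow, ← rpow_pow_comm two_pos.le]
        ring

lemma summable_norm_rpow_neg {K s : ℝ} (hs : 1 < s)
    (hK : ∀ x, 1 ≤ x → (normLE hN x).card ≤ K * x) : Summable fun a ↦ (N a : ℝ) ^ (-s) := by
  classical
  have hK₀ : 0 ≤ K := by simpa using (Nat.cast_nonneg _).trans (hK 1 le_rfl)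
  have geometric : Summable fun k ↦ 2 * K * (2 ^ (1 - s) : ℝ) ^ k :=
    (summable_geometric_of_lt_one (by positivity)
      (rpow_lt_one_of_one_lt_of_neg one_lt_two (by linarith))).mul_left _
  refine summable_of_sum_le (c := ∑' k, 2 * K * (2 ^ (1 - s) : ℝ) ^ k)
    (fun a ↦ by positivity) fun v ↦ ?_
  have at_zero : (N 0 : ℝ) ^ (-s) = 0 := by simp [zero_rpow (by linarith : -s ≠ 0)]
  calc ∑ a ∈ v, (N a : ℝ) ^ (-s)
      = ∑ k ∈ (v.erase 0).image (fun a ↦ Nat.log 2 (N a)),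
          ∑ a ∈ v.erase 0 with Nat.log 2 (N a) = k, (N a : ℝ) ^ (-s) := by
        rw [← Finset.sum_erase v at_zero, Finset.sum_fiberwise_of_maps_to]
        exact fun a ↦ Finset.mem_image_of_mem _
    _ ≤ ∑ k ∈ (v.erase 0).image (fun a ↦ Nat.log 2 (N a)), 2 * K * (2 ^ (1 - s) : ℝ) ^ k := by
        refine Finset.sum_le_sum fun k _ ↦ sum_norm_rpow_neg_le_of_log_eq hN (by linarith) hK ?_
        exact fun a ha ↦ (Finset.mem_filter.1 ha).imp_left Finset.ne_of_mem_erase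
    _ ≤ _ := geometric.sum_le_tsum _ fun k _ ↦ by positivity

include hN in
lemma hasSum_ite_dvd_moebius (a : α) [DecidablePred (· ∣ a)] [Decidable (a = 1)] :
    HasSum (fun d ↦ if d ∣ a then moebius d / (N a : ℝ) ^ 2 else 0) (if a = 1 then 1 else 0) := by
  classical
  rcases eq_or_ne a 0 with rfl | ha
  · have := domain_nontrivial N N.map_zero N.map_one
    simp [hasSum_zero]
  have mem_divisors (d : α) : d ∈ (normLE hN (N a)).filter (· ∣ a) ↔ d ∣ a :=
    Finset.mem_filter.trans (and_iff_right_of_imp (mem_normLE_of_dvd hN ((mem_normLE hN).2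
      ⟨ha, le_rfl⟩)))
  have sum_eq := sum_moebius_common_dvd ha (b := a)
    fun d ↦ (mem_divisors d).trans (and_self_iff).symm
  suffices (if a = 1 then 1 else 0 : ℝ)
      = ∑ d ∈ normLE hN (N a) with d ∣ a, if d ∣ a then moebius d / (N a : ℝ) ^ 2 else 0 from
    this ▸ hasSum_sum_of_ne_finset_zero fun d hd ↦ if_neg (mt (mem_divisors d).2 hd)
  rw [Finset.sum_congr rfl fun d hd ↦ if_pos ((mem_divisors d).1 hd), ← Finset.sum_div,
    ← Int.cast_sum, sum_eq, isRelPrime_self, isUnit_iff_eq_one]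
  rcases eq_or_ne a 1 with rfl | ha₁ <;> simp [*]

include hN in
lemma tsum_moebius_div_sq_mul_tsum_one_div_sq (hs : Summable fun a ↦ 1 / (N a : ℝ) ^ 2) :
    (∑' a, moebius a / (N a : ℝ) ^ 2) * ∑' a, 1 / (N a : ℝ) ^ 2 = 1 := by
  classical
  set F : α × α → ℝ := fun p ↦ moebius p.1 / (N p.1 : ℝ) ^ 2 * (1 / (N p.2 : ℝ) ^ 2) with hF
  set G : α × α → ℝ := fun p ↦ if p.2 ∣ p.1 then moebius p.2 / (N p.1 : ℝ) ^ 2 else 0 with hG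
  have F_eq_G (a b : α) : G (a * b, a) = F (a, b) := by
    simp [hF, hG, mul_pow, div_eq_mul_inv]
    ring
  have F_hasSum : HasSum F ((∑' a, moebius a / (N a : ℝ) ^ 2) * ∑' a, 1 / (N a : ℝ) ^ 2) := by
    have hμ := summable_norm_moebius_div_sq hs
    have product_summable := summable_mul_of_summable_norm hμ hs.norm
    exact hμ.of_norm.hasSum.mul hs.hasSum product_summable
  have G_hasSum : HasSum G ((∑' a, moebius a / (N a : ℝ) ^ 2) * ∑' a, 1 / (N a : ℝ) ^ 2) := by
    refine (hasSum_iff_hasSum_of_ne_zero_bij (fun p : F.support ↦ (p.1.1 * p.1.2, p.1.1))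
      ?_ ?_ fun p ↦ F_eq_G _ _).2 F_hasSum
    · rintro ⟨⟨a, b⟩, hab⟩ ⟨⟨a', b'⟩, _⟩ h
      obtain ⟨h, rfl⟩ : a * b = a' * b' ∧ a = a' := Prod.ext_iff.1 h
      have ha : a ≠ 0 := by rintro rfl; simp [hF] at hab
      simpa using mul_left_cancel₀ ha h
    · rintro ⟨c, a⟩ hca
      obtain ⟨b, rfl⟩ : a ∣ c := by_contra fun h ↦ hca (if_neg h)
      exact ⟨⟨(a, b), (F_eq_G a b).symm.trans_ne hca⟩, rfl⟩
  exact (G_hasSum.prod_fiberwise fun c ↦ hasSum_ite_dvd_moebius hN c).unique (hasSum_ite_eq 1 1)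

lemma normLE_eq_empty (hx : x < 1) : normLE hN x = ∅ :=
  Finset.eq_empty_of_forall_notMem fun a ha ↦ by
    rw [mem_normLE] at ha
    have : (1 : ℝ) ≤ N a := mod_cast one_le_norm hN ha.1
    linarith [ha.2]

lemma relPrimeCount_eq_tsum (x : ℝ) :
    (relPrimeCount hN x : ℝ) = ∑' a, moebius a * ((normLE hN (x / N a)).card : ℝ) ^ 2 := by
  rw [tsum_eq_sum (s := normLE hN x), ← Int.cast_natCast, relPrimeCount_eq_sum]
  · push_cast
    rfl
  intro a ha
  have := domain_nontrivial N N.map_zero N.map_one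
  rcases eq_or_ne a 0 with rfl | ha₀
  · simp
  have : x / N a < 1 :=
    (div_lt_one (mod_cast one_le_norm hN ha₀)).2 (by simpa [mem_normLE, ha₀] using ha)
  simp [normLE_eq_empty hN this]

section Asymptotics

include hK

lemma abs_card_normLE_sq_sub_le (hc : 0 ≤ c) (hθ : θ ≤ 1) (hx : 0 < x) :
    |((normLE hN x).card : ℝ) ^ 2 - (c * x) ^ 2| ≤ (c + K) ^ 2 * x ^ (1 + θ) := by
  have hK₀ := error_coeff_nonneg hN hK
  rcases lt_or_ge x 1 with hx₁ | hx₁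
  · rw [normLE_eq_empty hN hx₁, Finset.card_empty, Nat.cast_zero, zero_pow two_ne_zero, zero_sub,
      abs_neg, abs_of_nonneg (by positivity), mul_pow, ← rpow_two x]
    gcongr ?_ ^ 2 * ?_
    · linarith
    · exact rpow_le_rpow_of_exponent_ge hx hx₁.le (by linarith)
  · have add_le : |(normLE hN x).card + c * x| ≤ (2 * c + K) * x := by
      rw [abs_of_nonneg (by positivity)]
      linarith [card_normLE_le hN hK hθ hx₁]
    calc |((normLE hN x).card : ℝ) ^ 2 - (c * x) ^ 2|
        = |(normLE hN x).card + c * x| * |(normLE hN x).card - c * x| := by rw [sq_sub_sq, abs_mul]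
      _ ≤ (2 * c + K) * x * (K * x ^ θ) := by
          gcongr
          exact hK x hx₁
      _ = ((c + K) ^ 2 - c ^ 2) * x ^ (1 + θ) := by
          rw [rpow_add hx, rpow_one]
          ring
      _ ≤ (c + K) ^ 2 * x ^ (1 + θ) := by
          gcongr
          linarith [sq_nonneg c]

lemma summable_norm_rpow_neg_one_add (hθ₀ : 0 < θ) (hθ₁ : θ ≤ 1) :
    Summable fun a ↦ (N a : ℝ) ^ (-(1 + θ)) :=
  summable_norm_rpow_neg hN (by linarith) fun _ ↦ card_normLE_le hN hK hθ₁

lemma summable_one_div_norm_sq (hθ : θ ≤ 1) : Summable fun a ↦ 1 / (N a : ℝ) ^ 2 := by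
  simpa only [rpow_neg (Nat.cast_nonneg _), rpow_two, one_div]
    using summable_norm_rpow_neg hN one_lt_two fun _ ↦ card_normLE_le hN hK hθ

lemma abs_relPrimeCount_sub_le (hc : 0 ≤ c) (hθ₀ : 0 < θ) (hθ₁ : θ ≤ 1) (hx : 0 < x) :
    |relPrimeCount hN x - (∑' a, moebius a / (N a : ℝ) ^ 2) * (c * x) ^ 2|
      ≤ (c + K) ^ 2 * x ^ (1 + θ) * ∑' a, (N a : ℝ) ^ (-(1 + θ)) := by
  set f : α → ℝ := fun a ↦
    moebius a * (((normLE hN (x / N a)).card : ℝ) ^ 2 - (c * (x / N a)) ^ 2) with hf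
  have f_le (a : α) : ‖f a‖ ≤ (c + K) ^ 2 * x ^ (1 + θ) * (N a : ℝ) ^ (-(1 + θ)) := by
    have := domain_nontrivial N N.map_zero N.map_one
    rcases eq_or_ne a 0 with rfl | ha
    · simp only [hf, moebius_zero, Int.cast_zero, zero_mul, norm_zero]
      positivity
    have hNa : (0 : ℝ) < N a := mod_cast one_le_norm hN ha
    calc ‖f a‖ ≤ 1 * ((c + K) ^ 2 * (x / N a) ^ (1 + θ)) := by
          rw [hf, norm_mul]
          gcongr
          · exact (norm_eq_abs _).trans_le (mod_cast abs_moebius_le_one a)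
          · exact abs_card_normLE_sq_sub_le hN hK hc hθ₁ (by positivity)
      _ = _ := by rw [div_rpow hx.le hNa.le, rpow_neg hNa.le]; ring
  have bound_hasSum :=
    (summable_norm_rpow_neg_one_add hN hK hθ₀ hθ₁).hasSum.mul_left ((c + K) ^ 2 * x ^ (1 + θ))
  have main_summable : Summable fun a ↦ moebius a / (N a : ℝ) ^ 2 * (c * x) ^ 2 :=
    (summable_norm_moebius_div_sq (summable_one_div_norm_sq hN hK hθ₁)).of_norm.mul_right _
  have split (a : α) : moebius a * ((normLE hN (x / N a)).card : ℝ) ^ 2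
      = f a + moebius a / (N a : ℝ) ^ 2 * (c * x) ^ 2 := by
    simp only [hf]
    ring
  rw [relPrimeCount_eq_tsum, tsum_congr split,
    Summable.tsum_add (bound_hasSum.summable.of_norm_bounded f_le) main_summable, tsum_mul_right,
    add_sub_cancel_right]
  exact tsum_of_norm_bounded bound_hasSum f_le

theorem exists_abs_relPrimeCount_div_sub_le (hc : 0 < c) (hθ₀ : 0 < θ) (hθ₁ : θ < 1) :
    ∃ C, 0 < C ∧ ∀ x, 1 ≤ x →
      |relPrimeCount hN x / ((normLE hN x).card : ℝ) ^ 2 - 1 / ∑' a, 1 / (N a : ℝ) ^ 2|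
        ≤ C * x ^ (θ - 1) := by
  obtain ⟨δ, hδ, card_ge⟩ := exists_pos_mul_le_card_normLE hN hK hc hθ₁
  have hK₀ := error_coeff_nonneg hN hK
  have inv_zeta :=
    tsum_moebius_div_sq_mul_tsum_one_div_sq hN (summable_one_div_norm_sq hN hK hθ₁.le)
  rw [← eq_one_div_of_mul_eq_one_left inv_zeta]
  set m : ℝ := ∑' a, moebius a / (N a : ℝ) ^ 2
  set S : ℝ := ∑' a, (N a : ℝ) ^ (-(1 + θ))
  have hm : m ≠ 0 := left_ne_zero_of_mul_eq_one inv_zeta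
  have hS : 0 ≤ S := tsum_nonneg fun a ↦ by positivity
  refine ⟨(c + K) ^ 2 * (S + |m|) / δ ^ 2, by positivity, fun x hx ↦ ?_⟩
  have hx₀ : 0 < x := by linarith
  set Q : ℝ := ((normLE hN x).card : ℝ) ^ 2
  have hQ : (δ * x) ^ 2 ≤ Q := pow_le_pow_left₀ (by positivity) (card_ge x hx) 2
  have hQ₀ : 0 < Q := lt_of_lt_of_le (by positivity) hQ
  calc |relPrimeCount hN x / Q - m|
      = |(relPrimeCount hN x - m * (c * x) ^ 2) - m * (Q - (c * x) ^ 2)| / Q := by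
        rw [← abs_of_pos hQ₀, ← abs_div, abs_of_pos hQ₀]
        congr 1
        field_simp
        ring
    _ ≤ ((c + K) ^ 2 * x ^ (1 + θ) * S + |m| * ((c + K) ^ 2 * x ^ (1 + θ))) / (δ * x) ^ 2 := by
        gcongr
        refine (abs_sub _ _).trans (add_le_add
          (abs_relPrimeCount_sub_le hN hK hc.le hθ₀ hθ₁.le hx₀) ?_)
        rw [abs_mul]
        gcongr
        exact abs_card_normLE_sq_sub_le hN hK hc.le hθ₁.le hx₀
    _ = (c + K) ^ 2 * (S + |m|) / δ ^ 2 * x ^ (θ - 1) := by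
        rw [(by ring : θ - 1 = 1 + θ - 2), rpow_sub hx₀, rpow_two]
        field_simp

end Asymptotics

end ArithmeticSemigroup

section GaussianIdeals

/-- The integral basis `1, √d` of `ℤ√d`. -/
noncomputable def zsqrtdBasis (d : ℤ) : Module.Basis (Fin 2) ℤ (ℤ√d) :=
  .ofEquivFun
    { toFun := fun z ↦ ![z.re, z.im]
      invFun := fun v ↦ ⟨v 0, v 1⟩
      map_add' := by simp
      map_smul' := by simp
      left_inv := fun _ ↦ rfl
      right_inv := fun v ↦ by ext i; fin_cases i <;> rfl }

instance (d : ℤ) : Module.Finite ℤ (ℤ√d) := .of_basis (zsqrtdBasis d)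

instance (d : ℤ) : Module.Free ℤ (ℤ√d) := .of_basis (zsqrtdBasis d)

lemma algebraNorm_zsqrtd {d : ℤ} (z : ℤ√d) : Algebra.norm ℤ z = z.norm := by
  have repr_eq (z : ℤ√d) (i : Fin 2) : (zsqrtdBasis d).repr z i = ![z.re, z.im] i := rfl
  have basis_zero : zsqrtdBasis d 0 = 1 := (zsqrtdBasis d).repr.injective <| by
    ext i
    fin_cases i <;> simp [repr_eq]
  have basis_one : zsqrtdBasis d 1 = Zsqrtd.sqrtd := (zsqrtdBasis d).repr.injective <| by
    ext i
    fin_cases i <;> simp [repr_eq]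
  rw [Algebra.norm_eq_matrix_det (zsqrtdBasis d), Matrix.det_fin_two]
  simp only [Algebra.leftMulMatrix_eq_repr_mul, repr_eq, basis_zero, basis_one, Zsqrtd.norm_def]
  simp

lemma absNorm_span_gaussianInt (z : GaussianInt) :
    (Ideal.absNorm (Ideal.span {z}) : ℝ) = (z.re : ℝ) ^ 2 + (z.im : ℝ) ^ 2 := by
  have : z.norm = z.re ^ 2 + z.im ^ 2 := by
    rw [Zsqrtd.norm_def]
    ring
  rw [Ideal.absNorm_span_singleton, algebraNorm_zsqrtd, GaussianInt.natCast_natAbs_norm, this]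
  push_cast
  rfl

lemma exists_associated_mem_quadrant {z : GaussianInt} (hz : z ≠ 0) :
    ∃ w : GaussianInt, Associated w z ∧ 0 < w.re ∧ 0 ≤ w.im := by
  let i : GaussianIntˣ := ⟨⟨0, 1⟩, ⟨0, -1⟩, by ext <;> simp, by ext <;> simp⟩
  have re_or_im_ne_zero : z.re ≠ 0 ∨ z.im ≠ 0 := by
    contrapose! hz
    exact Zsqrtd.ext hz.1 hz.2
  obtain h | h | h | h : (0 < z.re ∧ 0 ≤ z.im) ∨ (z.re ≤ 0 ∧ 0 < z.im) ∨ (z.re < 0 ∧ z.im ≤ 0) ∨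
      (0 ≤ z.re ∧ z.im < 0) := by omega
  · exact ⟨z, .refl z, h⟩
  · exact ⟨z * (-i : GaussianIntˣ), associated_mul_unit_left z _ (Units.isUnit _),
      by simpa [i] using h.symm⟩
  · exact ⟨-z, .neg_left .rfl, by simpa using h⟩
  · exact ⟨z * i, associated_mul_unit_left z _ i.isUnit, by simpa [i] using h.symm⟩

lemma eq_of_associated_of_mem_quadrant {z w : GaussianInt} (hzw : Associated z w)
    (hz : 0 < z.re ∧ 0 ≤ z.im) (hw : 0 < w.re ∧ 0 ≤ w.im) : z = w := by
  obtain ⟨u, rfl⟩ := hzw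
  have norm_u : (u : GaussianInt).re ^ 2 + (u : GaussianInt).im ^ 2 = 1 := by
    have := (Zsqrtd.norm_eq_one_iff' (by norm_num) _).2 u.isUnit
    rw [Zsqrtd.norm_def] at this
    linarith
  have re_mul_conj : z.re * (z * u).re + z.im * (z * u).im
      = (z.re ^ 2 + z.im ^ 2) * (u : GaussianInt).re := by
    simp
    ring
  have re_pos : 0 < (u : GaussianInt).re := by
    refine pos_of_mul_pos_right (a := z.re ^ 2 + z.im ^ 2) ?_ (by positivity)
    have := mul_pos hz.1 hw.1
    have := mul_nonneg hz.2 hw.2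
    linarith
  have re_eq : (u : GaussianInt).re = 1 := by nlinarith [sq_nonneg (u : GaussianInt).im]
  have im_eq : (u : GaussianInt).im = 0 := by simpa [re_eq] using norm_u
  rw [(Zsqrtd.ext re_eq im_eq : (u : GaussianInt) = 1), mul_one]

lemma finite_setOf_absNorm_gaussianInt_le (n : ℕ) :
    {I : Ideal GaussianInt | Ideal.absNorm I ≤ n}.Finite :=
  Ideal.finite_setOfPred_absNorm_le n

lemma card_normLE_gaussianInt (x : ℝ) :
    (normLE finite_setOf_absNorm_gaussianInt_le x).card = (quadrantPoints x).ncard := by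
  have norm_eq (a b : ℕ) : (Ideal.absNorm (Ideal.span {(⟨a, b⟩ : GaussianInt)}) : ℝ)
      = (a : ℝ) ^ 2 + (b : ℝ) ^ 2 := by
    rw [absNorm_span_gaussianInt]
    push_cast
    rfl
  rw [← Set.ncard_coe_finset]
  refine (Set.ncard_congr (fun p _ ↦ Ideal.span {(⟨p.1, p.2⟩ : GaussianInt)}) ?_ ?_ ?_).symm
  · rintro p ⟨hp, hx⟩
    refine (mem_normLE _).2 ⟨fun h ↦ ?_, (norm_eq _ _).trans_le hx⟩
    have := congr_arg Zsqrtd.re (Ideal.span_singleton_eq_bot.1 h)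
    simp at this
    omega
  · rintro p q ⟨hp, -⟩ ⟨hq, -⟩ h
    have := eq_of_associated_of_mem_quadrant (Ideal.span_singleton_eq_span_singleton.1 h)
      ⟨Int.natCast_pos.2 hp, Int.natCast_nonneg _⟩ ⟨Int.natCast_pos.2 hq, Int.natCast_nonneg _⟩
    simpa [Zsqrtd.ext_iff, Prod.ext_iff] using this
  · intro I hI
    obtain ⟨hI, hx⟩ := (mem_normLE _).1 (Finset.mem_coe.1 hI)
    obtain ⟨z, rfl⟩ := (IsPrincipalIdealRing.principal I).principal
    obtain ⟨⟨a, b⟩, hw, ha, hb⟩ := exists_associated_mem_quadrant (z := z)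
      fun hz ↦ hI (Ideal.span_singleton_eq_bot.2 hz)
    lift a to ℕ using ha.le
    lift b to ℕ using hb
    rw [Ideal.submodule_span_eq, ← Ideal.span_singleton_eq_span_singleton.2 hw] at hx ⊢
    exact ⟨(a, b), ⟨Int.natCast_pos.1 ha, (norm_eq a b).symm.trans_le hx⟩, rfl⟩

lemma normI_eq_absNorm (I : Ideal GaussianInt) : normI I = Ideal.absNorm I := by
  rw [Ideal.absNorm_apply, Submodule.cardQuot_apply]
  rfl

lemma P_eq_normLE_product (x : ℝ) :
    P x = (normLE finite_setOf_absNorm_gaussianInt_le x ×ˢ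
      normLE finite_setOf_absNorm_gaussianInt_le x : Finset _) := by
  ext p
  simp [P, normI_eq_absNorm, mem_normLE]
  tauto

lemma ncard_P (x : ℝ) :
    (P x).ncard = (normLE finite_setOf_absNorm_gaussianInt_le x).card ^ 2 := by
  rw [P_eq_normLE_product, Set.ncard_coe_finset, Finset.card_product, sq]

lemma ncard_coprime_P (x : ℝ) :
    {p ∈ P x | p.1 ⊔ p.2 = ⊤}.ncard = relPrimeCount finite_setOf_absNorm_gaussianInt_le x := by
  classical
  have coprime_iff (I J : Ideal GaussianInt) : I ⊔ J = ⊤ ↔ IsRelPrime I J := by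
    simp only [IsRelPrime, Ideal.dvd_iff_le, Ideal.isUnit_iff]
    exact ⟨fun h D hI hJ ↦ top_le_iff.1 (h ▸ sup_le hI hJ), fun h ↦ h le_sup_left le_sup_right⟩
  rw [relPrimeCount, ← Set.ncard_coe_finset, Finset.coe_filter, P_eq_normLE_product]
  simp only [coprime_iff, Finset.mem_coe]

lemma zetaQi2_eq_tsum : zetaQi2 = ∑' I : Ideal GaussianInt, 1 / (Ideal.absNorm I : ℝ) ^ 2 := by
  simp only [zetaQi2, normI_eq_absNorm]
  refine tsum_subtype_eq_of_support_subset (s := {I | I ≠ ⊥})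
    (f := fun I : Ideal GaussianInt ↦ 1 / (Ideal.absNorm I : ℝ) ^ 2) fun I hI ↦ ?_
  rintro rfl
  simp at hI

end GaussianIdeals

theorem coprimeProbability_asymptotic :
    ∃ C : ℝ, 0 < C ∧ ∀ x : ℝ, 1 ≤ x →
      |({p ∈ P x | p.1 ⊔ p.2 = ⊤}.ncard : ℝ) / ((P x).ncard : ℝ) - 1 / zetaQi2|
        ≤ C * x ^ (-(2 : ℝ) / 3) := by
  have ideal_count (x : ℝ) (hx : 1 ≤ x) :
      |(normLE finite_setOf_absNorm_gaussianInt_le x).card - π / 4 * x| ≤ 73 * x ^ (1 / 3 : ℝ) := by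
    rw [card_normLE_gaussianInt]
    exact abs_ncard_quadrantPoints_sub_le hx
  obtain ⟨C, hC, bound⟩ := exists_abs_relPrimeCount_div_sub_le finite_setOf_absNorm_gaussianInt_le
    ideal_count (by positivity) (by norm_num) (by norm_num)
  refine ⟨C, hC, fun x hx ↦ ?_⟩
  rw [ncard_coprime_P, ncard_P, zetaQi2_eq_tsum, (by norm_num : -(2 : ℝ) / 3 = 1 / 3 - 1)]
  exact mod_cast bound x hx
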